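/- Let H be a connected finite simple graph with maximum degree Δ(H) ≥ 5, and let p ≥ 3 and q ≥ 3 be integers with ω(H) = p and p + q = Δ(H) + 1. Then there exists a subset V_1 ⊆ V(H) such that V_1 is a K_p-free subset of V(H) of maximum cardinality and the induced subgraph H[V(H) ∖ V_1] is K_q-free. -/

import Mathlib

/-!
Call a set of vertices a transversal if it meets every `p`-clique; its complement is then
`K_p`-free, so a smallest transversal `T` without a `q`-clique is wanted. In a counterexample
minimal in the number of edges, isolate a vertex `r` of a `q`-clique in some smallest transversal.
The isolated graph has a good smallest transversal `U`, which in `G` is one vertex too small but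
becomes a transversal when the pivot `r` is added. Every pivot `y` is then joined to a
`(q - 1)`-clique in `U` as well as to the missed `p`-cliques, which nearly exhausts its degree, so
that `U` can be changed in a controlled way by adding a pivot and removing a vertex which that pivot
turns into a new pivot.

For `p ≥ 4` these exchanges form a walk that never returns, so it continues forever inside a finite
vertex set. The degree bound leaves only `p = q = 3` beyond that, and there the exchanges become
flips of a 2-colouring at a core, a vertex common to all monochromatic triangles. Choosing a
colouring with the most monochromatic edges, a walk of flips that must close up yields two
monochromatic triangles sharing an edge, and the flips around them exceed some vertex degree.
-/

namespace CliqueFreePartition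

open SimpleGraph Finset

section FinsetCounting

variable {α : Type*} {A B : Finset α} {x x' z z' e : α}

theorem mem_of_card_le_of_forall_ne (hAB : #A ≤ #B) (hz : z ∈ B) (hx : x ∈ A) (hxB : x ∉ B)
    (h : ∀ b ∈ B, b ≠ z → b ∈ A) : ∀ a ∈ A, a ≠ x → a ∈ B := by
  classical
  have hsub : B.erase z ⊆ A.erase x := fun b hb =>
    mem_erase.2 ⟨fun hbx => hxB (hbx ▸ mem_of_mem_erase hb),
      h b (mem_of_mem_erase hb) (ne_of_mem_erase hb)⟩
  have heq : B.erase z = A.erase x :=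
    eq_of_subset_of_card_le hsub (by rw [card_erase_of_mem hz, card_erase_of_mem hx]; omega)
  exact fun a ha hax => mem_of_mem_erase (heq ▸ mem_erase.2 ⟨hax, ha⟩)

theorem mem_of_card_le_of_forall_ne_ne (hAB : #A ≤ #B) (hz : z ∈ B) (hz' : z' ∈ B) (hzz' : z ≠ z')
    (hx : x ∈ A) (hx' : x' ∈ A) (hxx' : x ≠ x') (hxB : x ∉ B) (hxB' : x' ∉ B)
    (h : ∀ b ∈ B, b ≠ z → b ≠ z' → b ∈ A) : ∀ a ∈ A, a ≠ x → a ≠ x' → a ∈ B := by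
  classical
  have hmem : ∀ a ∈ A.erase x', a ≠ x → a ∈ B.erase z' := by
    refine mem_of_card_le_of_forall_ne (z := z) ?_ (mem_erase.2 ⟨hzz', hz⟩)
      (mem_erase.2 ⟨hxx', hx⟩) (fun hxe => hxB (mem_of_mem_erase hxe)) fun b hb hbz => ?_
    · rw [card_erase_of_mem hz', card_erase_of_mem hx']; omega
    · refine mem_erase.2 ⟨fun hbx => hxB' (hbx ▸ mem_of_mem_erase hb), ?_⟩
      exact h b (mem_of_mem_erase hb) hbz (ne_of_mem_erase hb)
  exact fun a ha hax hax' => mem_of_mem_erase (hmem a (mem_erase.2 ⟨hax', ha⟩) hax)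

theorem exists_ne_notMem_of_card_le (hBA : #B ≤ #A) (hz : z ∈ B) (he : e ∈ B) (hze : z ≠ e)
    (hzA : z ∉ A) (heA : e ∉ A) (x : α) : ∃ a ∈ A, a ≠ x ∧ a ∉ B := by
  classical
  have hlt : #((B.erase z).erase e) < #(A.erase x) := by
    have hB : #((B.erase z).erase e) + 2 = #B := by
      rw [card_erase_of_mem (mem_erase.2 ⟨hze.symm, he⟩), card_erase_of_mem hz]
      have := one_lt_card.2 ⟨z, hz, e, he, hze⟩
      omega
    have := pred_card_le_card_erase (s := A) (a := x)
    omega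
  obtain ⟨a, ha, haB⟩ := exists_mem_notMem_of_card_lt_card hlt
  rw [mem_erase] at ha
  refine ⟨a, ha.2, ha.1, fun h => haB ?_⟩
  exact mem_erase.2 ⟨fun hae => heA (hae ▸ ha.2), mem_erase.2 ⟨fun haz => hzA (haz ▸ ha.2), h⟩⟩

end FinsetCounting

section Transversals

variable {V : Type*} {G : SimpleGraph V} {p s m : ℕ}

/-- A graph with `Δ ≤ p + s` and `ω ≤ p` that refutes the theorem for `q = s + 1`: `m` is the
least size of a set meeting every `p`-clique, and every such set of size `m` contains an
`(s + 1)`-clique. -/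
structure Counterexample (G : SimpleGraph V) (p s m : ℕ) : Prop where
  two_le_s : 2 ≤ s
  card_le_of_adj : ∀ (v : V) (S : Finset V), (∀ w ∈ S, G.Adj v w) → #S ≤ p + s
  cliqueFree : G.CliqueFree (p + 1)
  le_card : ∀ T : Finset V, G.CliqueFreeOn (↑T)ᶜ p → m ≤ #T
  not_cliqueFreeOn : ∀ T : Finset V, G.CliqueFreeOn (↑T)ᶜ p → #T = m → ¬ G.CliqueFreeOn ↑T (s + 1)

/-- A set that is one vertex too small to meet every `p`-clique, and has no `(s + 1)`-clique. -/
structure IsDeficient (G : SimpleGraph V) (s m : ℕ) (U : Finset V) : Prop where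
  card_add_one : #U + 1 = m
  cliqueFreeOn : G.CliqueFreeOn ↑U (s + 1)

/-- A `p`-clique disjoint from `U`. -/
structure IsMissed (G : SimpleGraph V) (p : ℕ) (U A : Finset V) : Prop where
  isNClique : G.IsNClique p A
  notMem : ∀ a ∈ A, a ∉ U

/-- A vertex whose addition to `U` makes it meet every `p`-clique. -/
def IsPivot (G : SimpleGraph V) (p : ℕ) (U : Finset V) (y : V) : Prop :=
  ∀ A, IsMissed G p U A → y ∈ A

/-- An `s`-clique in `U` that `y` completes to an `(s + 1)`-clique. -/
structure IsBlock (G : SimpleGraph V) (s : ℕ) (U : Finset V) (y : V) (D : Finset V) : Prop where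
  subset : D ⊆ U
  isNClique : G.IsNClique s D
  adj : ∀ z ∈ D, G.Adj y z

/-- A `p`-clique that meets `U` in `z` only. -/
structure IsPrivate (G : SimpleGraph V) (p : ℕ) (U : Finset V) (z : V) (B : Finset V) : Prop where
  isNClique : G.IsNClique p B
  mem : z ∈ B
  eq_of_mem : ∀ b ∈ B, b ∈ U → b = z

variable {U A B D : Finset V} {v x y z e f : V}

theorem IsMissed.adj (hA : IsMissed G p U A) (hx : x ∈ A) (hy : y ∈ A) (hxy : x ≠ y) : G.Adj x y :=
  hA.isNClique.isClique hx hy hxy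

theorem IsPrivate.adj (hB : IsPrivate G p U z B) (hx : x ∈ B) (hy : y ∈ B) (hxy : x ≠ y) :
    G.Adj x y :=
  hB.isNClique.isClique hx hy hxy

theorem IsPrivate.notMem (hB : IsPrivate G p U z B) (hx : x ∈ B) (hxz : x ≠ z) : x ∉ U :=
  fun hxU => hxz (hB.eq_of_mem x hx hxU)

theorem IsBlock.adj_of_mem (hD : IsBlock G s U y D) (hx : x ∈ D) (hz : z ∈ D) (hxz : x ≠ z) :
    G.Adj x z :=
  hD.isNClique.isClique hx hz hxz

theorem Counterexample.exists_isMissed_of_card_lt (C : Counterexample G p s m) (h : #U < m) :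
    ∃ A, IsMissed G p U A := by
  by_contra! hA
  exact absurd (C.le_card U fun A hAU hAp => hA A ⟨hAp, fun _ ha => hAU ha⟩) (by omega)

theorem Counterexample.exists_isMissed (C : Counterexample G p s m) (hU : IsDeficient G s m U) :
    ∃ A, IsMissed G p U A :=
  C.exists_isMissed_of_card_lt (by have := hU.card_add_one; omega)

theorem Counterexample.notMem_of_isPivot (C : Counterexample G p s m) (hU : IsDeficient G s m U)
    (hy : IsPivot G p U y) : y ∉ U := by
  obtain ⟨A, hA⟩ := C.exists_isMissed hU
  exact hA.notMem y (hy A hA)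

theorem isBlock_erase [DecidableEq V] {K : Finset V} (hK : G.IsNClique (s + 1) K) (hy : y ∈ K)
    (hKU : K ⊆ insert y U) : IsBlock G s U y (K.erase y) where
  subset := subset_insert_iff.1 hKU
  isNClique := hK.erase_of_mem hy
  adj _ hz := hK.isClique hy (mem_of_mem_erase hz) (ne_of_mem_erase hz).symm

theorem IsPivot.cliqueFreeOn_compl_insert [DecidableEq V] (hy : IsPivot G p U y) :
    G.CliqueFreeOn (↑(insert y U))ᶜ p := fun A hAU hA =>
  have hAU' : ∀ a ∈ A, a ∉ insert y U := fun _ ha => hAU ha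
  hAU' y (hy A ⟨hA, fun a ha haU => hAU' a ha (mem_insert_of_mem haU)⟩) (mem_insert_self y U)

theorem IsPivot.swap {U' : Finset V} (hy : IsPivot G p U y) (hyU' : y ∈ U')
    (hU' : ∀ u ∈ U, u ≠ z → u ∈ U') : IsPivot G p U' z := by
  classical
  intro A hA
  by_contra hzA
  refine hA.notMem y (hy A ⟨hA.isNClique, fun a ha haU => ?_⟩) hyU'
  exact hA.notMem a ha (hU' a haU fun haz => hzA (haz ▸ ha))

theorem IsPivot.isPrivate_of_isMissed_swap [DecidableEq V] (hy : IsPivot G p U y) (hyz : y ≠ z)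
    (hB : IsMissed G p ((insert y U).erase z) B) : IsPrivate G p U z B ∧ y ∉ B := by
  have hyB : y ∉ B := fun h => hB.notMem y h (by simp [hyz])
  have heq : ∀ b ∈ B, b ∈ U → b = z := fun b hb hbU => by
    by_contra hbz
    exact hB.notMem b hb (by simp [hbz, hbU])
  have hzB : z ∈ B := by
    by_contra hzB
    exact hyB (hy B ⟨hB.isNClique, fun b hb hbU => hzB (heq b hb hbU ▸ hb)⟩)
  exact ⟨⟨hB.isNClique, hzB, heq⟩, hyB⟩

theorem exists_not_adj_of_isNClique (hG : G.CliqueFree (p + 1)) (hA : G.IsNClique p A) (e : V) :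
    ∃ a ∈ A, ¬ G.Adj e a := by
  classical
  by_contra! h
  exact hG _ (hA.insert h)

theorem not_adj_of_forall_ne (hG : G.CliqueFree (p + 1)) (hA : G.IsNClique p A) (hx : x ∈ A)
    (he : ∀ a ∈ A, a ≠ x → G.Adj e a) (hf : ∀ a ∈ A, a ≠ x → G.Adj f a) : ¬ G.Adj e f := by
  classical
  intro hef
  have hAf : G.IsNClique p (insert f (A.erase x)) :=
    hA.insert_erase (fun a ha => hf a (mem_sdiff.1 ha).1 (by simpa using (mem_sdiff.1 ha).2)) hx
  refine hG _ (hAf.insert (a := e) fun a ha => ?_)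
  rcases mem_insert.1 ha with rfl | ha
  · exact hef
  · exact he a (mem_of_mem_erase ha) (ne_of_mem_erase ha)

namespace Counterexample

theorem exists_isBlock (C : Counterexample G p s m) (hU : IsDeficient G s m U)
    (hy : IsPivot G p U y) : ∃ D, IsBlock G s U y D := by
  classical
  have hcard : #(insert y U) = m := by
    rw [card_insert_of_notMem (C.notMem_of_isPivot hU hy), hU.card_add_one]
  have hnot := C.not_cliqueFreeOn _ hy.cliqueFreeOn_compl_insert hcard
  simp only [CliqueFreeOn, not_forall, not_not, coe_subset] at hnot
  obtain ⟨K, hKU, hK⟩ := hnot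
  have hyK : y ∈ K := by
    by_contra hyK
    exact hU.cliqueFreeOn (coe_subset.2 ((subset_insert_iff_of_notMem hyK).1 hKU)) hK
  exact ⟨_, isBlock_erase hK hyK hKU⟩

theorem exists_isPrivate (C : Counterexample G p s m) (hU : IsDeficient G s m U)
    (hy : IsPivot G p U y) (hz : z ∈ U) : ∃ B, IsPrivate G p U z B ∧ y ∉ B := by
  classical
  have hyU := C.notMem_of_isPivot hU hy
  have hyz : y ≠ z := fun h => hyU (h ▸ hz)
  obtain ⟨B, hB⟩ : ∃ B, IsMissed G p ((insert y U).erase z) B := by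
    refine C.exists_isMissed_of_card_lt ?_
    rw [card_erase_of_mem (mem_insert_of_mem hz), card_insert_of_notMem hyU]
    have := hU.card_add_one
    omega
  exact ⟨B, hy.isPrivate_of_isMissed_swap hyz hB⟩

theorem isDeficient_swap [DecidableEq V] (C : Counterexample G p s m) (hU : IsDeficient G s m U)
    (hy : IsPivot G p U y) (hz : ∀ D, IsBlock G s U y D → z ∈ D) :
    IsDeficient G s m ((insert y U).erase z) := by
  have hyU := C.notMem_of_isPivot hU hy
  obtain ⟨D, hD⟩ := C.exists_isBlock hU hy
  constructor
  · rw [card_erase_of_mem (mem_insert_of_mem (hD.subset (hz D hD))), card_insert_of_notMem hyU,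
      Nat.add_sub_cancel, hU.card_add_one]
  · intro K hKU hK
    have hKU' : K ⊆ insert y U := fun k hk => mem_of_mem_erase (hKU hk)
    by_cases hyK : y ∈ K
    · exact notMem_erase z _ (hKU (mem_of_mem_erase (hz _ (isBlock_erase hK hyK hKU'))))
    · exact hU.cliqueFreeOn (coe_subset.2 ((subset_insert_iff_of_notMem hyK).1 hKU')) hK

/-- Of its at most `p + s` neighbours, `y` has `p - 1` in `A` and `s` in `D`. -/
theorem eq_of_adj_of_notMem (C : Counterexample G p s m) (hA : IsMissed G p U A) (hy : y ∈ A)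
    (hD : IsBlock G s U y D) (he : G.Adj y e) (hf : G.Adj y f) (heA : e ∉ A) (hfA : f ∉ A)
    (heD : e ∉ D) (hfD : f ∉ D) : e = f := by
  classical
  by_contra hef
  have hdisj : Disjoint (A.erase y) D := disjoint_left.2 fun a ha haD =>
    hA.notMem a (mem_of_mem_erase ha) (hD.subset haD)
  have hle := C.card_le_of_adj y (insert e (insert f (A.erase y ∪ D))) (by
    simp only [mem_insert, mem_union, mem_erase]
    rintro w (rfl | rfl | ⟨hwy, hw⟩ | hw)
    exacts [he, hf, hA.adj hy hw hwy.symm, hD.adj w hw])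
  have hA0 : 0 < #A := card_pos.2 ⟨y, hy⟩
  rw [card_insert_of_notMem (by simp [hef, heA, heD]), card_insert_of_notMem (by simp [hfA, hfD]),
    card_union_of_disjoint hdisj, card_erase_of_mem hy, hA.isNClique.card_eq,
    hD.isNClique.card_eq] at hle
  rw [hA.isNClique.card_eq] at hA0
  omega

theorem card_add_card_add_card_le (C : Counterexample G p s m) {S₁ S₂ S₃ : Finset V}
    (h₁ : ∀ w ∈ S₁, G.Adj v w) (h₂ : ∀ w ∈ S₂, G.Adj v w) (h₃ : ∀ w ∈ S₃, G.Adj v w)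
    (h₁₂ : Disjoint S₁ S₂) (h₁₃ : Disjoint S₁ S₃) (h₂₃ : Disjoint S₂ S₃) :
    #S₁ + #S₂ + #S₃ ≤ p + s := by
  classical
  rw [← card_union_of_disjoint h₁₂, ← card_union_of_disjoint (disjoint_union_left.2 ⟨h₁₃, h₂₃⟩)]
  refine C.card_le_of_adj v _ fun w hw => ?_
  simp only [mem_union] at hw
  rcases hw with (hw | hw) | hw
  exacts [h₁ w hw, h₂ w hw, h₃ w hw]

theorem card_le_two_of_isBlock_of_isPrivate (C : Counterexample G p s m)
    (hD : IsBlock G s U v D) (hz : z ∈ D) (hB : IsPrivate G p U z B) {S : Finset V}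
    (hS : ∀ w ∈ S, G.Adj z w) (hSB : ∀ w ∈ S, w ∉ B) (hSD : ∀ w ∈ S, w ∉ D) : #S ≤ 2 := by
  classical
  have hle := C.card_add_card_add_card_le (v := z) (S₁ := S) (S₂ := B.erase z) (S₃ := D.erase z)
    hS (fun w hw => hB.adj hB.mem (mem_of_mem_erase hw) (ne_of_mem_erase hw).symm)
    (fun w hw => hD.adj_of_mem hz (mem_of_mem_erase hw) (ne_of_mem_erase hw).symm)
    (disjoint_left.2 fun w hw hwB => hSB w hw (mem_of_mem_erase hwB))
    (disjoint_left.2 fun w hw hwD => hSD w hw (mem_of_mem_erase hwD))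
    (disjoint_left.2 fun w hwB hwD => hB.notMem (mem_of_mem_erase hwB) (ne_of_mem_erase hwB)
      (hD.subset (mem_of_mem_erase hwD)))
  rw [card_erase_of_mem hB.mem, card_erase_of_mem hz, hB.isNClique.card_eq,
    hD.isNClique.card_eq] at hle
  have hB0 := card_pos.2 ⟨z, hB.mem⟩
  rw [hB.isNClique.card_eq] at hB0
  omega

end Counterexample

/-- The configuration left when a private clique of `z` leaves a missed clique `A`: the pivots in
`P`, all but two vertices of `A`, are joined to the adjacent vertices `z ∈ U` and `e ∉ U ∪ A`. -/
structure IsEscape (G : SimpleGraph V) (p : ℕ) (U A P : Finset V) (z e : V) : Prop where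
  isMissed : IsMissed G p U A
  subset : P ⊆ A
  card_add_two : #P + 2 = p
  isPivot : ∀ y ∈ P, IsPivot G p U y
  mem : z ∈ U
  notMem : e ∉ U
  notMem_missed : e ∉ A
  adj : G.Adj z e
  adj_left : ∀ y ∈ P, G.Adj z y
  adj_right : ∀ y ∈ P, G.Adj e y

namespace IsEscape

variable {P : Finset V} {b w : V}

theorem mem_of_adj (h : IsEscape G p U A P z e) (C : Counterexample G p s m)
    (hU : IsDeficient G s m U) (hy : y ∈ P) (hyb : G.Adj y b) (hbU : b ∉ U) (hbe : b ≠ e) :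
    b ∈ A := by
  by_contra hbA
  obtain ⟨D, hD⟩ := C.exists_isBlock hU (h.isPivot y hy)
  exact hbe (C.eq_of_adj_of_notMem h.isMissed (h.subset hy) hD hyb (h.adj_right y hy).symm hbA
    h.notMem_missed (fun hbD => hbU (hD.subset hbD)) fun heD => h.notMem (hD.subset heD))

theorem mem_of_isBlock_of_adj (h : IsEscape G p U A P z e) (C : Counterexample G p s m)
    (hy : y ∈ P) (hD : IsBlock G s U y D) (hw : w ∈ U) (hyw : G.Adj y w) : w ∈ D := by
  by_contra hwD
  refine h.notMem ?_
  rwa [← C.eq_of_adj_of_notMem h.isMissed (h.subset hy) hD hyw (h.adj_right y hy).symm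
    (fun hwA => h.isMissed.notMem w hwA hw) h.notMem_missed hwD
    fun heD => h.notMem (hD.subset heD)]

theorem mem_of_isBlock (h : IsEscape G p U A P z e) (C : Counterexample G p s m) (hy : y ∈ P)
    (hD : IsBlock G s U y D) : z ∈ D :=
  h.mem_of_isBlock_of_adj C hy hD h.mem (h.adj_left y hy).symm

theorem notMem_of_isPrivate (h : IsEscape G p U A P z e) (C : Counterexample G p s m)
    (hU : IsDeficient G s m U) (hv : v ∈ P) (hB : IsPrivate G p U z B) (hvB : v ∉ B)
    (hy : y ∈ P) : y ∉ B := by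
  intro hyB
  have hz_notMem : z ∉ A := fun hzA => h.isMissed.notMem z hzA h.mem
  have hcard : #A = #B := by rw [h.isMissed.isNClique.card_eq, hB.isNClique.card_eq]
  have hBA : ∀ b ∈ B, b ≠ z → b ≠ e → b ∈ A := fun b hb hbz hbe => by
    obtain rfl | hby := eq_or_ne b y
    · exact h.subset hy
    · exact h.mem_of_adj C hU hy (hB.adj hyB hb hby.symm) (hB.notMem hb hbz) hbe
  by_cases heB : e ∈ B
  · obtain ⟨x, hxA, hxv, hxB⟩ := exists_ne_notMem_of_card_le hcard.ge hB.mem heB h.adj.ne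
      hz_notMem h.notMem_missed v
    have hAB := mem_of_card_le_of_forall_ne_ne hcard.le hB.mem heB h.adj.ne (h.subset hv) hxA
      hxv.symm hvB hxB hBA
    refine not_adj_of_forall_ne C.cliqueFree h.isMissed.isNClique hxA (fun a ha hax => ?_)
      (fun a ha hax => ?_) h.adj <;> obtain rfl | hav := eq_or_ne a v
    · exact h.adj_left a hv
    · exact hB.adj hB.mem (hAB a ha hav hax) fun hza => hz_notMem (hza ▸ ha)
    · exact h.adj_right a hv
    · exact hB.adj heB (hAB a ha hav hax) fun hea => h.notMem_missed (hea ▸ ha)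
  · have hAB := mem_of_card_le_of_forall_ne hcard.le hB.mem (h.subset hv) hvB
      fun b hb hbz => hBA b hb hbz fun hbe => heB (hbe ▸ hb)
    obtain ⟨a, ha, hza⟩ := exists_not_adj_of_isNClique C.cliqueFree h.isMissed.isNClique z
    obtain rfl | hav := eq_or_ne a v
    · exact hza (h.adj_left a hv)
    · exact hza (hB.adj hB.mem (hAB a ha hav) fun h' => hz_notMem (h' ▸ ha))

/-- The degree of `z` forces `p = 4` and leaves no room for `w`. -/
theorem mem_of_adj_left (h : IsEscape G p U A P z e) (C : Counterexample G p s m) (hp : 4 ≤ p)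
    (hU : IsDeficient G s m U) (hv : v ∈ P) (hD : IsBlock G s U v D) (hB : IsPrivate G p U z B)
    (hvB : v ∉ B) (hzw : G.Adj z w) (hwP : w ∉ P) (hwD : w ∉ D) : w ∈ B := by
  classical
  by_contra hwB
  have hle := C.card_le_two_of_isBlock_of_isPrivate hD (h.mem_of_isBlock C hv hD) hB
    (S := insert w P) (forall_mem_insert _ _ _ |>.2 ⟨hzw, h.adj_left⟩)
    (forall_mem_insert _ _ _ |>.2 ⟨hwB, fun y hy => h.notMem_of_isPrivate C hU hv hB hvB hy⟩)
    (forall_mem_insert _ _ _ |>.2 ⟨hwD, fun y hy hyD =>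
      h.isMissed.notMem y (h.subset hy) (hD.subset hyD)⟩)
  rw [card_insert_of_notMem hwP] at hle
  have := h.card_add_two
  omega

theorem mem_of_isPrivate (h : IsEscape G p U A P z e) (C : Counterexample G p s m) (hp : 4 ≤ p)
    (hU : IsDeficient G s m U) (hv : v ∈ P) (hB : IsPrivate G p U z B) (hvB : v ∉ B) : e ∈ B := by
  obtain ⟨D, hD⟩ := C.exists_isBlock hU (h.isPivot v hv)
  exact h.mem_of_adj_left C hp hU hv hD hB hvB h.adj
    (fun heP => h.notMem_missed (h.subset heP)) fun heD => h.notMem (hD.subset heD)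

theorem isBlock_unique (h : IsEscape G p U A P z e) (C : Counterexample G p s m) (hp : 4 ≤ p)
    (hU : IsDeficient G s m U) (hv : v ∈ P) (hD : IsBlock G s U v D) (hy : y ∈ P)
    {D' : Finset V} (hD' : IsBlock G s U y D') : D' = D := by
  have hzD' := h.mem_of_isBlock C hy hD'
  obtain ⟨B, hB, hvB⟩ := C.exists_isPrivate hU (h.isPivot v hv) h.mem
  refine eq_of_subset_of_card_le (fun w hw => ?_)
    (by rw [hD.isNClique.card_eq, hD'.isNClique.card_eq])
  by_contra hwD
  have hwz : w ≠ z := fun hwz => hwD (hwz ▸ h.mem_of_isBlock C hv hD)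
  exact hwz (hB.eq_of_mem w (h.mem_of_adj_left C hp hU hv hD hB hvB
    (hD'.adj_of_mem hzD' hw hwz.symm)
    (fun hwP => h.isMissed.notMem w (h.subset hwP) (hD'.subset hw)) hwD)
    (hD'.subset hw))

theorem isPivot_swap [DecidableEq V] (h : IsEscape G p U A P z e) (C : Counterexample G p s m)
    (hp : 4 ≤ p) (hU : IsDeficient G s m U) (hv : v ∈ P) :
    IsPivot G p ((insert v U).erase z) e := by
  intro B hB
  obtain ⟨hB, hvB⟩ := (h.isPivot v hv).isPrivate_of_isMissed_swap (h.adj_left v hv).ne' hB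
  exact h.mem_of_isPrivate C hp hU hv hB hvB

theorem mem_of_isBlock_swap [DecidableEq V] (h : IsEscape G p U A P z e)
    (C : Counterexample G p s m) (hp : 4 ≤ p) (hU : IsDeficient G s m U) (hv : v ∈ P)
    (hD : IsBlock G s ((insert v U).erase z) e D) : v ∈ D := by
  by_contra hvD
  obtain ⟨B, hB, hvB⟩ := C.exists_isPrivate hU (h.isPivot v hv) h.mem
  have heB := h.mem_of_isPrivate C hp hU hv hB hvB
  have hDU : ∀ d ∈ D, d ≠ z ∧ d ∈ U := fun d hd => by
    have := hD.subset hd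
    simp only [mem_erase, mem_insert] at this
    exact ⟨this.1, this.2.resolve_left fun hdv => hvD (hdv ▸ hd)⟩
  have hle := C.card_add_card_add_card_le (v := e) (S₁ := P) (S₂ := B.erase e) (S₃ := D)
    h.adj_right (fun w hw => hB.adj heB (mem_of_mem_erase hw) (ne_of_mem_erase hw).symm) hD.adj
    (disjoint_left.2 fun y hy hyB => h.notMem_of_isPrivate C hU hv hB hvB hy (mem_of_mem_erase hyB))
    (disjoint_left.2 fun y hy hyD => h.isMissed.notMem y (h.subset hy) (hDU y hyD).2)
    (disjoint_left.2 fun b hb hbD =>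
      (hDU b hbD).1 (hB.eq_of_mem b (mem_of_mem_erase hb) (hDU b hbD).2))
  rw [card_erase_of_mem heB, hB.isNClique.card_eq, hD.isNClique.card_eq] at hle
  have := h.card_add_two
  omega

/-- A further vertex `w` of the blocks would complete `P ∪ {z, e}` to a `(p + 1)`-clique. -/
theorem not_adj_of_mem_isBlock (h : IsEscape G p U A P z e) (C : Counterexample G p s m)
    (hp : 4 ≤ p) (hU : IsDeficient G s m U) (hv : v ∈ P) (hD : IsBlock G s U v D) (hw : w ∈ D)
    (hwz : w ≠ z) : ¬ G.Adj e w := by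
  classical
  intro hew
  have hP : G.IsNClique #P P := ⟨h.isMissed.isNClique.isClique.subset h.subset, rfl⟩
  have hwP : ∀ y ∈ P, G.Adj w y := fun y hy => by
    obtain ⟨D', hD'⟩ := C.exists_isBlock hU (h.isPivot y hy)
    obtain rfl := h.isBlock_unique C hp hU hv hD hy hD'
    exact (hD'.adj w hw).symm
  have hK : G.IsNClique (#P + 1 + 1 + 1) (insert w (insert e (insert z P))) := by
    refine ((hP.insert h.adj_left).insert ?_).insert ?_
    · exact forall_mem_insert _ _ _ |>.2 ⟨h.adj.symm, h.adj_right⟩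
    · exact forall_mem_insert _ _ _ |>.2 ⟨hew.symm, forall_mem_insert _ _ _ |>.2
        ⟨hD.adj_of_mem hw (h.mem_of_isBlock C hv hD) hwz, hwP⟩⟩
  rw [show #P + 1 + 1 + 1 = p + 1 by have := h.card_add_two; omega] at hK
  exact C.cliqueFree _ hK

end IsEscape

namespace Counterexample

theorem not_isEscape (C : Counterexample G p s m) (hp : 4 ≤ p) (hU : IsDeficient G s m U)
    {P : Finset V} : ¬ IsEscape G p U A P z e := by
  classical
  intro h
  obtain ⟨v, hv⟩ : P.Nonempty := card_pos.1 (by have := h.card_add_two; omega)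
  obtain ⟨D, hD⟩ := C.exists_isBlock hU (h.isPivot v hv)
  have hU' := C.isDeficient_swap hU (h.isPivot v hv) fun D' hD' => h.mem_of_isBlock C hv hD'
  obtain ⟨E, hE⟩ := C.exists_isBlock hU' (h.isPivot_swap C hp hU hv)
  have hvE := h.mem_of_isBlock_swap C hp hU hv hE
  obtain ⟨w, hwE, hwv⟩ : ∃ w ∈ E, w ≠ v := exists_mem_ne
    (by rw [hE.isNClique.card_eq]; exact C.two_le_s) v
  have hw := hE.subset hwE
  simp only [mem_erase, mem_insert, hwv, false_or] at hw
  have hwD := h.mem_of_isBlock_of_adj C hv hD hw.2 (hE.adj_of_mem hvE hwE hwv.symm)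
  exact h.not_adj_of_mem_isBlock C hp hU hv hD hwD hw.1 (hE.adj w hwE)

theorem mem_of_adj_of_ne (C : Counterexample G p s m) (hU : IsDeficient G s m U)
    (hv : IsPivot G p U v) (hA : IsMissed G p U A) (hve : G.Adj v e) (heU : e ∉ U) (heA : e ∉ A)
    (hvb : G.Adj v b) (hbU : b ∉ U) (hbe : b ≠ e) : b ∈ A := by
  by_contra hbA
  obtain ⟨D, hD⟩ := C.exists_isBlock hU hv
  exact hbe (C.eq_of_adj_of_notMem hA (hv A hA) hD hvb hve hbA heA (fun h => hbU (hD.subset h))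
    fun h => heU (hD.subset h))

theorem isPivot_of_mem_isPrivate (C : Counterexample G p s m) (hU : IsDeficient G s m U)
    (hv : IsPivot G p U v) (hB : IsPrivate G p U z B) (hvB : v ∈ B) (hA : IsMissed G p U A)
    (he : e ∈ B) (hez : e ≠ z) (heA : e ∉ A) (hy : y ∈ B) (hyA : y ∈ A) :
    IsPivot G p U y := by
  intro A' hA'
  have hve : G.Adj v e := hB.adj hvB he fun h => heA (h ▸ hv A hA)
  have hA'A : ∀ b ∈ A', b ≠ e → b ∈ A := fun b hb hbe => by
    obtain rfl | hbv := eq_or_ne b v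
    · exact hv A hA
    · exact C.mem_of_adj_of_ne hU hv hA hve (hB.notMem he hez) heA
        (hA'.adj (hv A' hA') hb hbv.symm) (hA'.notMem b hb) hbe
  have hcard : #A = #A' := by rw [hA.isNClique.card_eq, hA'.isNClique.card_eq]
  by_contra hyA'
  have heA' : e ∈ A' := by
    by_contra heA'
    have hsub : A' ⊆ A := fun b hb => hA'A b hb fun h => heA' (h ▸ hb)
    exact hyA' (eq_of_subset_of_card_le hsub hcard.le ▸ hyA)
  have hAA' := mem_of_card_le_of_forall_ne hcard.le heA' hyA hyA' hA'A
  obtain ⟨a, ha, hea⟩ := exists_not_adj_of_isNClique C.cliqueFree hA.isNClique e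
  obtain rfl | hay := eq_or_ne a y
  · exact hea (hB.adj he hy fun h => heA (h ▸ ha))
  · exact hea (hA'.adj heA' (hAA' a ha hay) fun h => heA (h ▸ ha))

theorem exists_isEscape (C : Counterexample G p s m) (hU : IsDeficient G s m U)
    (hv : IsPivot G p U v) (hz : z ∈ U) (hB : IsPrivate G p U z B) (hvB : v ∈ B)
    (hA : IsMissed G p U A) (he : e ∈ B) (hez : e ≠ z) (heA : e ∉ A) :
    ∃ P, IsEscape G p U A P z e := by
  classical
  have heU := hB.notMem he hez
  have hve : G.Adj v e := hB.adj hvB he fun h => heA (h ▸ hv A hA)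
  have hBA : ∀ b ∈ B, b ≠ z → b ≠ e → b ∈ A := fun b hb hbz hbe => by
    obtain rfl | hbv := eq_or_ne b v
    · exact hv A hA
    · exact C.mem_of_adj_of_ne hU hv hA hve heU heA (hB.adj hvB hb hbv.symm) (hB.notMem hb hbz) hbe
  have hBe : e ∈ B.erase z := mem_erase.2 ⟨hez, he⟩
  have hP : ∀ y ∈ (B.erase z).erase e, y ∈ B ∧ y ≠ z ∧ y ≠ e := by simp +contextual
  refine ⟨(B.erase z).erase e, hA, fun y hy => ?_, ?_, fun y hy => ?_, hz, heU, heA,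
    hB.adj hB.mem he hez.symm, fun y hy => ?_, fun y hy => ?_⟩
  · exact hBA y (hP y hy).1 (hP y hy).2.1 (hP y hy).2.2
  · rw [← hB.isNClique.card_eq, ← card_erase_add_one hB.mem, ← card_erase_add_one hBe]
  · exact C.isPivot_of_mem_isPrivate hU hv hB hvB hA he hez heA (hP y hy).1
      (hBA y (hP y hy).1 (hP y hy).2.1 (hP y hy).2.2)
  · exact hB.adj hB.mem (hP y hy).1 (hP y hy).2.1.symm
  · exact hB.adj he (hP y hy).1 (hP y hy).2.2.symm

theorem mem_of_isPivot_mem_isPrivate (C : Counterexample G p s m) (hp : 4 ≤ p)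
    (hU : IsDeficient G s m U) (hv : IsPivot G p U v) (hz : z ∈ U) (hB : IsPrivate G p U z B)
    (hvB : v ∈ B) (hA : IsMissed G p U A) (hy : y ∈ B) (hyz : y ≠ z) : y ∈ A := by
  by_contra hyA
  obtain ⟨P, hP⟩ := C.exists_isEscape hU hv hz hB hvB hA hy hyz hyA
  exact C.not_isEscape hp hU hP

theorem mem_or_mem_of_isPrivate (C : Counterexample G p s m) (hp : 4 ≤ p)
    (hU : IsDeficient G s m U) (hx : IsPivot G p U x) (hy : IsPivot G p U y) (hxy : x ≠ y)
    (hv : IsPivot G p U v) (hz : z ∈ U) (hB : IsPrivate G p U z B) (hvB : v ∈ B) :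
    x ∈ B ∨ y ∈ B := by
  by_contra! hB'
  obtain ⟨A, hA⟩ := C.exists_isMissed hU
  obtain ⟨b, hb, hbz, hbA⟩ := exists_ne_notMem_of_card_le
    (by rw [hA.isNClique.card_eq, hB.isNClique.card_eq]) (hx A hA) (hy A hA) hxy hB'.1 hB'.2 z
  exact hbA (C.mem_of_isPivot_mem_isPrivate hp hU hv hz hB hvB hA hb hbz)

theorem exists_isPrivate_forall_notMem (C : Counterexample G p s m) (hp : 4 ≤ p)
    (hU : IsDeficient G s m U) (hx : IsPivot G p U x) (hy : IsPivot G p U y) (hz : z ∈ U)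
    (hB : IsPrivate G p U z B) (hxB : x ∈ B) (hyB : y ∉ B) :
    ∃ B', IsPrivate G p U z B' ∧ y ∉ B' ∧ ∀ b ∈ B', b ≠ z → b ∉ B := by
  obtain ⟨A, hA⟩ := C.exists_isMissed hU
  have hzA : ∀ a ∈ A, a ≠ z := fun a ha haz => hA.notMem a ha (haz ▸ hz)
  have hBA : ∀ A', IsMissed G p U A' → ∀ b ∈ B, b ≠ z → b ∈ A' := fun A' hA' b hb hbz =>
    C.mem_of_isPivot_mem_isPrivate hp hU hx hz hB hxB hA' hb hbz
  have hAB := mem_of_card_le_of_forall_ne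
    (by rw [hA.isNClique.card_eq, hB.isNClique.card_eq]) hB.mem (hy A hA) hyB (hBA A hA)
  obtain ⟨B', hB', hxB'⟩ := C.exists_isPrivate hU hx hz
  have hyB' : y ∉ B' := fun hyB' => by
    obtain ⟨a, ha, hza⟩ := exists_not_adj_of_isNClique C.cliqueFree hA.isNClique z
    obtain rfl | hay := eq_or_ne a y
    · exact hza (hB'.adj hB'.mem hyB' (hzA a ha).symm)
    · exact hza (hB.adj hB.mem (hAB a ha hay) (hzA a ha).symm)
  refine ⟨B', hB', hyB', fun b hb hbz hbB => ?_⟩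
  have hb_pivot : IsPivot G p U b := fun A' hA' => hBA A' hA' b hbB hbz
  exact (C.mem_or_mem_of_isPrivate hp hU hx hy (fun h => hyB (h ▸ hxB)) hb_pivot hz hB' hb).elim
    hxB' hyB'

theorem exists_adj_of_isMissed_of_isMissed (C : Counterexample G p s m)
    (hU : IsDeficient G s m U) (hx : IsPivot G p U x) (hA : IsMissed G p U A)
    (hB : IsMissed G p U B) (hy : y ∈ A) (hyB : y ∉ B) :
    ∃ e, e ∉ A ∧ e ∉ U ∧ G.Adj x e ∧ ∀ a ∈ A, a ≠ y → G.Adj e a := by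
  have hcard : #A = #B := by rw [hA.isNClique.card_eq, hB.isNClique.card_eq]
  obtain ⟨D, hD⟩ := C.exists_isBlock hU hx
  have hxA := hx A hA
  have hxB := hx B hB
  obtain ⟨e, heB, heA⟩ : ∃ e ∈ B, e ∉ A := by
    by_contra! h
    exact hyB (eq_of_subset_of_card_le h hcard.le ▸ hy)
  have hxe : ∀ b ∈ B, b ∉ A → G.Adj x b := fun b hb hbA => hB.adj hxB hb fun h => hbA (h ▸ hxA)
  have hBA : ∀ b ∈ B, b ≠ e → b ∈ A := fun b hb hbe => by
    by_contra hbA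
    exact hbe (C.eq_of_adj_of_notMem hA hxA hD (hxe b hb hbA) (hxe e heB heA) hbA heA
      (fun h => hB.notMem b hb (hD.subset h)) fun h => hB.notMem e heB (hD.subset h))
  have hAB := mem_of_card_le_of_forall_ne hcard.le heB hy hyB hBA
  exact ⟨e, heA, hB.notMem e heB, hxe e heB heA, fun a ha hay =>
    hB.adj heB (hAB a ha hay) fun h => heA (h ▸ ha)⟩

theorem isPivot_of_ne (C : Counterexample G p s m) (hU : IsDeficient G s m U)
    (hx : IsPivot G p U x) (hA : IsMissed G p U A) (hy : y ∈ A) (hy_pivot : ¬ IsPivot G p U y)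
    (hz : z ∈ A) (hzy : z ≠ y) : IsPivot G p U z := by
  intro B' hB'
  by_contra hzB'
  obtain ⟨B, hB, hyB⟩ : ∃ B, IsMissed G p U B ∧ y ∉ B := by
    simpa only [IsPivot, not_forall, exists_prop] using hy_pivot
  obtain ⟨D, hD⟩ := C.exists_isBlock hU hx
  obtain ⟨e, heA, heU, hxe, he⟩ := C.exists_adj_of_isMissed_of_isMissed hU hx hA hB hy hyB
  obtain ⟨f, hfA, hfU, hxf, hf⟩ := C.exists_adj_of_isMissed_of_isMissed hU hx hA hB' hz hzB'
  obtain rfl : e = f := C.eq_of_adj_of_notMem hA (hx A hA) hD hxe hxf heA hfA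
    (fun h => heU (hD.subset h)) fun h => hfU (hD.subset h)
  obtain ⟨a, ha, hea⟩ := exists_not_adj_of_isNClique C.cliqueFree hA.isNClique e
  obtain rfl | hay := eq_or_ne a y
  · exact hea (hf a ha hzy.symm)
  · exact hea (he a ha hay)

theorem exists_isPivot_ne (C : Counterexample G p s m) (hp : 3 ≤ p) (hU : IsDeficient G s m U)
    (hx : IsPivot G p U x) : ∃ y, IsPivot G p U y ∧ y ≠ x := by
  classical
  obtain ⟨A, hA⟩ := C.exists_isMissed hU
  obtain ⟨a, ha, b, hb, hab⟩ : ∃ a ∈ A.erase x, ∃ b ∈ A.erase x, a ≠ b := one_lt_card.1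
    (by rw [card_erase_of_mem (hx A hA), hA.isNClique.card_eq]; omega)
  rw [mem_erase] at ha hb
  by_cases ha_pivot : IsPivot G p U a
  · exact ⟨a, ha_pivot, ha.1⟩
  · exact ⟨b, C.isPivot_of_ne hU hx hA ha.2 ha_pivot hb.2 hab.symm, hb.1⟩

theorem eq_of_adj_of_notMem_isBlock (C : Counterexample G p s m) (hU : IsDeficient G s m U)
    (hy : IsPivot G p U y) (hD : IsBlock G s U y D) (he : e ∈ U) (hf : f ∈ U) (hye : G.Adj y e)
    (hyf : G.Adj y f) (heD : e ∉ D) (hfD : f ∉ D) : e = f := by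
  obtain ⟨A, hA⟩ := C.exists_isMissed hU
  exact C.eq_of_adj_of_notMem hA (hy A hA) hD hye hyf (fun h => hA.notMem e h he)
    (fun h => hA.notMem f h hf) heD hfD

theorem exists_mem_isBlock_of_notMem (C : Counterexample G p s m) (hU : IsDeficient G s m U)
    (hy : IsPivot G p U y) {D E : Finset V} (hD : IsBlock G s U y D) (hE : IsBlock G s U y E)
    (hz : z ∈ D) (hzE : z ∉ E) : ∃ w ∈ E, w ∉ D ∧ ∀ a ∈ D, a ≠ z → a ∈ E := by
  have hcard : #D = #E := by rw [hD.isNClique.card_eq, hE.isNClique.card_eq]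
  obtain ⟨w, hw, hwD⟩ : ∃ w ∈ E, w ∉ D := by
    by_contra! h
    exact hzE (eq_of_subset_of_card_le h hcard.le ▸ hz)
  refine ⟨w, hw, hwD, mem_of_card_le_of_forall_ne hcard.le hw hz hzE fun b hb hbw => ?_⟩
  by_contra hbD
  exact hbw (C.eq_of_adj_of_notMem_isBlock hU hy hD (hE.subset hb) (hE.subset hw)
    (hE.adj b hb) (hE.adj w hw) hbD hwD)

theorem mem_isBlock_of_ne (C : Counterexample G p s m) (hU : IsDeficient G s m U)
    (hy : IsPivot G p U y) {D E F : Finset V} (hD : IsBlock G s U y D) (hE : IsBlock G s U y E)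
    (hF : IsBlock G s U y F) (hz : z ∈ D) (hzE : z ∉ E) : ∀ a ∈ D, a ≠ z → a ∈ F := by
  classical
  by_cases hzF : z ∈ F
  · obtain ⟨w, hw, hwD, hDE⟩ := C.exists_mem_isBlock_of_notMem hU hy hD hE hz hzE
    have hwF : w ∉ F := fun hwF => by
      refine hU.cliqueFreeOn (t := insert w D) (coe_subset.2 (insert_subset (hE.subset hw)
        hD.subset)) (hD.isNClique.insert fun a ha => ?_)
      obtain rfl | haz := eq_or_ne a z
      · exact hF.adj_of_mem hwF hzF fun h => hwD (h ▸ hz)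
      · exact hE.adj_of_mem hw (hDE a ha haz) fun h => hwD (h ▸ ha)
    have hFD : F ⊆ D := fun b hb => by
      by_contra hbD
      exact hwF (C.eq_of_adj_of_notMem_isBlock hU hy hD (hE.subset hw) (hF.subset hb)
        (hE.adj w hw) (hF.adj b hb) hwD hbD ▸ hb)
    have hcard : #D = #F := by rw [hD.isNClique.card_eq, hF.isNClique.card_eq]
    exact fun a ha _ => eq_of_subset_of_card_le hFD hcard.le ▸ ha
  · obtain ⟨w, -, -, hDF⟩ := C.exists_mem_isBlock_of_notMem hU hy hD hF hz hzF
    exact hDF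

end Counterexample

section Walk

variable [DecidableEq V]

variable {T : Finset V} {x y x₁ y₁ : ℕ → V} {i j k : ℕ} {t u v w y' : V}

/-- The state reached from `T.erase (x 0)` by `i` swaps, the `j`-th of which replaces `x (j + 1)` by
`y j`. -/
def stage (T : Finset V) (x y : ℕ → V) (i : ℕ) : Finset V :=
  (T ∪ (range i).image y) \ (range (i + 1)).image x

theorem mem_stage : t ∈ stage T x y i ↔ (t ∈ T ∨ ∃ j < i, y j = t) ∧ ∀ j ≤ i, x j ≠ t := by
  simp [stage]

theorem stage_congr (hx : ∀ j ≤ i, x j = x₁ j) (hy : ∀ j < i, y j = y₁ j) :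
    stage T x y i = stage T x₁ y₁ i := by
  ext t
  simp +contextual only [mem_stage, hx]
  grind

theorem stage_succ (hi : y i ∉ T) (hx : ∀ j ≤ i, x j ∈ T) :
    stage T x y (i + 1) = (insert (y i) (stage T x y i)).erase (x (i + 1)) := by
  ext t
  simp only [mem_stage, mem_erase, mem_insert, Nat.lt_succ_iff]
  grind

theorem stage_update_of_le (a b : V) (hi : i ≤ k) :
    stage T (Function.update x (k + 1) a) (Function.update y k b) i = stage T x y i :=
  stage_congr (fun _ _ => Function.update_of_ne (by omega) _ _)
    fun _ _ => Function.update_of_ne (by omega) _ _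

theorem stage_update_succ {a b : V} (hb : b ∉ T) (hx : ∀ j ≤ k, x j ∈ T) :
    stage T (Function.update x (k + 1) a) (Function.update y k b) (k + 1) =
      (insert b (stage T x y k)).erase a := by
  rw [stage_succ, stage_update_of_le a b le_rfl, Function.update_self, Function.update_self]
  · rwa [Function.update_self]
  · intro j hj
    rw [Function.update_of_ne (by omega)]
    exact hx j hj

/-- A sequence of `k` swaps along deficient sets, starting from `T.erase (x 0)`. At each stage `x i`
and `y i` are distinct pivots, `x i ∈ T` and `y i ∉ T`; the swap replaces by `y i` a vertex
`x (i + 1)` of all its blocks. -/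
structure IsWalk (G : SimpleGraph V) (p s m : ℕ) (T : Finset V) (x y : ℕ → V) (k : ℕ) : Prop where
  isDeficient : ∀ i ≤ k, IsDeficient G s m (stage T x y i)
  isPivot_left : ∀ i ≤ k, IsPivot G p (stage T x y i) (x i)
  left_mem : ∀ i ≤ k, x i ∈ T
  left_inj : ∀ i ≤ k, ∀ j ≤ k, x i = x j → i = j
  right_notMem : ∀ i < k, y i ∉ T
  isPivot_right : ∀ i < k, IsPivot G p (stage T x y i) (y i)
  mem_of_isBlock : ∀ i < k, ∀ D, IsBlock G s (stage T x y i) (y i) D → x (i + 1) ∈ D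

/-- Every clique missed at stage `i` avoids the vertices deleted before. -/
def AvoidsPast (G : SimpleGraph V) (p : ℕ) (T : Finset V) (x y : ℕ → V) (i : ℕ) : Prop :=
  ∀ B, IsMissed G p (stage T x y i) B → ∀ j < i, x j ∉ B

namespace IsWalk

theorem left_ne_right (W : IsWalk G p s m T x y k) (hi : i ≤ k) (hj : j < k) : x i ≠ y j :=
  fun h => W.right_notMem j hj (h ▸ W.left_mem i hi)

theorem right_mem_stage (W : IsWalk G p s m T x y k) (hij : i < j) (hj : j ≤ k) :
    y i ∈ stage T x y j :=
  mem_stage.2 ⟨Or.inr ⟨i, hij, rfl⟩, fun _ hl => W.left_ne_right (hl.trans hj) (hij.trans_le hj)⟩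

theorem left_mem_stage (W : IsWalk G p s m T x y k) (hij : i < j) (hj : j ≤ k) :
    x j ∈ stage T x y i :=
  mem_stage.2 ⟨Or.inl (W.left_mem j hj), fun l hl h =>
    absurd (W.left_inj l (by omega) j hj h) (by omega)⟩

theorem exists_eq_right_of_mem (hij : i ≤ j) (hw : w ∈ stage T x y j)
    (hwi : w ∉ stage T x y i) : ∃ l, i ≤ l ∧ l < j ∧ w = y l := by
  simp only [mem_stage] at hw hwi
  grind

theorem exists_eq_left_of_notMem (hij : i ≤ j) (hw : w ∈ stage T x y i)
    (hwj : w ∉ stage T x y j) : ∃ l, i < l ∧ l ≤ j ∧ w = x l := by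
  simp only [mem_stage] at hw hwj
  grind

theorem notMem_stage_mono (W : IsWalk G p s m T x y k) (hij : i ≤ j) (hj : j ≤ k) (hw : w ∉ T)
    (hwj : w ∉ stage T x y j) : w ∉ stage T x y i := by
  intro hwi
  obtain ⟨l, -, hl, rfl⟩ := exists_eq_left_of_notMem hij hwi hwj
  exact hw (W.left_mem l (hl.trans hj))

theorem isPrivate_of_isMissed (W : IsWalk G p s m T x y k) (hij : i ≤ j) (hj : j ≤ k)
    (hB : IsMissed G p (stage T x y j) B) (hBx : ∀ l, i < l → l < j → x l ∉ B) :
    IsPrivate G p (stage T x y i) (x j) B := by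
  refine ⟨hB.isNClique, W.isPivot_left j hj B hB, fun b hb hbi => ?_⟩
  obtain ⟨l, hil, hlj, rfl⟩ := exists_eq_left_of_notMem hij hbi (hB.notMem b hb)
  obtain rfl | hlj := hlj.eq_or_lt
  · rfl
  · exact absurd hb (hBx l hil hlj)

theorem notMem_of_isPivot (W : IsWalk G p s m T x y k) (C : Counterexample G p s m) (hp : 4 ≤ p)
    (hij : i < j) (hj : j ≤ k) (hpast : AvoidsPast G p T x y j)
    (hB : IsMissed G p (stage T x y j) B) (hv : IsPivot G p (stage T x y i) v) : v ∉ B := by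
  intro hvB
  have hik : i < k := hij.trans_le hj
  exact (C.mem_or_mem_of_isPrivate hp (W.isDeficient i hik.le) (W.isPivot_left i hik.le)
    (W.isPivot_right i hik) (W.left_ne_right hik.le hik) hv (W.left_mem_stage hij hj)
    (W.isPrivate_of_isMissed hij.le hj hB fun l _ hl => hpast B hB l hl) hvB).elim
    (hpast B hB i hij) fun h => hB.notMem _ h (W.right_mem_stage hij hj)

/-- Otherwise all the other vertices of `A` are pivots of stage `i`, and `u` has too many neighbours
in `A`, in a clique missed at stage `j`, and in a block of `u`. -/
theorem isPivot_notMem (W : IsWalk G p s m T x y k) (C : Counterexample G p s m) (hp : 4 ≤ p)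
    (hij : i < j) (hj : j ≤ k) (hpast : ∀ l ≤ j, AvoidsPast G p T x y l)
    (hA : IsMissed G p (stage T x y i) A) (hu : IsPivot G p (stage T x y j) u) : u ∉ A := by
  intro huA
  have hik : i < k := hij.trans_le hj
  have hUi := W.isDeficient i hik.le
  have hyi := W.isPivot_right i hik
  have hUj := W.isDeficient j hj
  obtain ⟨B, hB⟩ := C.exists_isMissed hUj
  obtain ⟨D, hD⟩ := C.exists_isBlock hUj hu
  have huB := hu B hB
  have hu_pivot : ¬ IsPivot G p (stage T x y i) u := fun h =>
    W.notMem_of_isPivot C hp hij hj (hpast j le_rfl) hB h huB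
  have hA_pivot : ∀ a ∈ A, a ≠ u → IsPivot G p (stage T x y i) a := fun a ha hau =>
    C.isPivot_of_ne hUi hyi hA huA hu_pivot ha hau
  have hyiA : y i ∈ A.erase u := mem_erase.2 ⟨fun h => hu_pivot (h ▸ hyi), hyi A hA⟩
  have hle := C.card_add_card_add_card_le (v := u) (S₁ := (A.erase u).erase (y i))
    (S₂ := B.erase u) (S₃ := D)
    (fun w hw => hA.adj huA (mem_of_mem_erase (mem_of_mem_erase hw))
      (ne_of_mem_erase (mem_of_mem_erase hw)).symm)
    (fun w hw => hB.adj huB (mem_of_mem_erase hw) (ne_of_mem_erase hw).symm) hD.adj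
    (disjoint_left.2 fun a ha haB => ?_) (disjoint_left.2 fun a ha haD => ?_)
    (disjoint_left.2 fun b hb hbD => hB.notMem b (mem_of_mem_erase hb) (hD.subset hbD))
  · rw [card_erase_of_mem hyiA, card_erase_of_mem huA, card_erase_of_mem huB,
      hA.isNClique.card_eq, hB.isNClique.card_eq, hD.isNClique.card_eq] at hle
    omega
  · simp only [mem_erase] at ha
    exact W.notMem_of_isPivot C hp hij hj (hpast j le_rfl) hB (hA_pivot a ha.2.2 ha.2.1)
      (mem_of_mem_erase haB)
  · simp only [mem_erase] at ha
    obtain ⟨l, hil, hlj, rfl⟩ :=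
      exists_eq_right_of_mem hij.le (hD.subset haD) (hA.notMem a ha.2.2)
    obtain ⟨B', hB'⟩ := C.exists_isMissed (W.isDeficient l (by omega))
    have hil : i < l := lt_of_le_of_ne hil fun h => ha.1 (h ▸ rfl)
    exact W.notMem_of_isPivot C hp hil (by omega) (hpast l hlj.le) hB'
      (hA_pivot _ ha.2.2 ha.2.1) (W.isPivot_right l (by omega) B' hB')

theorem right_notMem_stage (W : IsWalk G p s m T x y k) (C : Counterexample G p s m)
    (hij : i ≤ j) (hj : j < k) : y j ∉ stage T x y i :=
  W.notMem_stage_mono hij hj.le (W.right_notMem j hj)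
    (C.notMem_of_isPivot (W.isDeficient j hj.le) (W.isPivot_right j hj))

/-- All but at most one of the `p - 1 ≥ 3` other vertices of `B'` lie in the block of `x i`, so they
have entered since stage `j`. -/
theorem exists_two_right_mem (W : IsWalk G p s m T x y k) (C : Counterexample G p s m) (hp : 4 ≤ p)
    (hji : j < i) (hi : i ≤ k) (hB : IsMissed G p (stage T x y i) B) {B' : Finset V}
    (hB' : IsPrivate G p (stage T x y j) (x i) B') (hyB' : y j ∉ B')
    (hdisj : ∀ b ∈ B', b ≠ x i → b ∉ B) :
    ∃ l l', j < l ∧ l < l' ∧ l' < i ∧ y l ∈ B' ∧ y l' ∈ B' ∧ ∀ t, j < t → t < l → y t ∉ B' := by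
  have hUi := W.isDeficient i hi
  have hxi := W.isPivot_left i hi
  obtain ⟨D, hD⟩ := C.exists_isBlock hUi hxi
  have hout : #(B'.erase (x i) \ D) ≤ 1 := card_le_one.2 fun a ha b hb => by
    simp only [mem_sdiff, mem_erase] at ha hb
    exact C.eq_of_adj_of_notMem hB (hxi B hB) hD (hB'.adj hB'.mem ha.1.2 ha.1.1.symm)
      (hB'.adj hB'.mem hb.1.2 hb.1.1.symm) (hdisj a ha.1.2 ha.1.1) (hdisj b hb.1.2 hb.1.1) ha.2 hb.2
  let J := {l ∈ range i | j < l ∧ y l ∈ B'}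
  have hmem_J : ∀ {l}, l ∈ J ↔ l < i ∧ j < l ∧ y l ∈ B' := by simp [J]
  have hsub : B'.erase (x i) ∩ D ⊆ J.image y := fun w hw => by
    rw [mem_inter, mem_erase] at hw
    obtain ⟨l, hjl, hli, rfl⟩ :=
      exists_eq_right_of_mem hji.le (hD.subset hw.2) (hB'.notMem hw.1.2 hw.1.1)
    refine mem_image_of_mem y (hmem_J.2 ⟨hli, lt_of_le_of_ne hjl ?_, hw.1.2⟩)
    rintro rfl
    exact hyB' hw.1.2
  have hJ : 1 < #J := by
    have hadd := card_sdiff_add_card_inter (B'.erase (x i)) D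
    have hle := (card_le_card hsub).trans card_image_le
    rw [card_erase_of_mem hB'.mem, hB'.isNClique.card_eq] at hadd
    omega
  have hne : J.Nonempty := card_pos.1 (by omega)
  obtain ⟨l', hl', hne'⟩ := exists_mem_ne hJ (J.min' hne)
  have hmin := hmem_J.1 (J.min'_mem hne)
  rw [hmem_J] at hl'
  refine ⟨J.min' hne, l', hmin.2.1, lt_of_le_of_ne (J.min'_le l' (hmem_J.2 hl')) hne'.symm, hl'.1,
    hmin.2.2, hl'.2.2, fun t hjt ht htB => ?_⟩
  exact absurd (J.min'_le t (hmem_J.2 ⟨by omega, hjt, htB⟩)) (by omega)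

/-- Let `x j` be the last deleted vertex of the missed clique `B`. A clique private to `x i` at
stage `j` and avoiding `B` acquires two of the vertices added later, contradicting `isPivot_notMem`
at the moment the first of them enters. -/
theorem avoidsPast (W : IsWalk G p s m T x y k) (C : Counterexample G p s m) (hp : 4 ≤ p) :
    ∀ i ≤ k, AvoidsPast G p T x y i := by
  intro i
  induction i using Nat.strong_induction_on with
  | _ i ih =>
  intro hi B hB j₀ hj₀ hj₀B
  obtain ⟨j, hj, hj_max⟩ := exists_max_image {j ∈ range i | x j ∈ B} id ⟨j₀, by simp [hj₀, hj₀B]⟩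
  simp only [mem_filter, mem_range, id, and_imp] at hj hj_max
  obtain ⟨hji, hjB⟩ := hj
  have hUj := W.isDeficient j (by omega)
  have hxi := W.left_mem_stage hji hi
  have hB_private := W.isPrivate_of_isMissed hji.le hi hB fun l hjl hli hl =>
    absurd (hj_max l hli hl) (by omega)
  obtain ⟨B', hB', hyB', hdisj⟩ := C.exists_isPrivate_forall_notMem hp hUj
    (W.isPivot_left j (by omega)) (W.isPivot_right j (by omega)) hxi hB_private hjB
    fun h => hB.notMem _ h (W.right_mem_stage hji hi)
  obtain ⟨l, l', hjl, hll', hli, hlB', hl'B', hl_min⟩ :=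
    W.exists_two_right_mem C hp hji hi hB hB' hyB' hdisj
  have hB'l : IsPrivate G p (stage T x y l) (x i) B' := by
    refine ⟨hB'.isNClique, hB'.mem, fun b hb hbl => ?_⟩
    by_contra hbi
    obtain ⟨t, hjt, htl, rfl⟩ := exists_eq_right_of_mem hjl.le hbl (hB'.notMem hb hbi)
    obtain rfl | hjt := hjt.eq_or_lt
    · exact hyB' hb
    · exact hl_min t hjt htl hb
  have hUl := W.isDeficient l (by omega)
  obtain ⟨A, hA⟩ := C.exists_isMissed hUl
  refine W.isPivot_notMem C hp hll' (by omega) (fun t ht => ih t (by omega) (by omega)) hA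
    (W.isPivot_right l' (by omega)) ?_
  exact C.mem_of_isPivot_mem_isPrivate hp hUl (W.isPivot_right l (by omega))
    (W.left_mem_stage (by omega) hi) hB'l hlB' hA hl'B' (W.left_ne_right hi (by omega)).symm

theorem mem_isBlock_of_adj (W : IsWalk G p s m T x y k) (C : Counterexample G p s m) (hp : 4 ≤ p)
    (hy' : IsPivot G p (stage T x y k) y') (hy'T : y' ∉ T) (hi : i < k) (hyy' : G.Adj (y i) y')
    (hA : IsMissed G p (stage T x y i) A) (hD : IsBlock G s (stage T x y i) (y i) D)
    (he : G.Adj (y i) e) (hey' : e ≠ y') (heA : e ∉ A) : e ∈ D := by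
  by_contra heD
  refine hey' (C.eq_of_adj_of_notMem hA (W.isPivot_right i hi A hA) hD he hyy' heA
    (W.isPivot_notMem C hp hi le_rfl (fun l hl => W.avoidsPast C hp l hl) hA hy') heD fun h => ?_)
  exact W.notMem_stage_mono hi.le le_rfl hy'T (C.notMem_of_isPivot (W.isDeficient k le_rfl) hy')
    (hD.subset h)

theorem right_not_adj_right (W : IsWalk G p s m T x y k) (C : Counterexample G p s m) (hp : 4 ≤ p)
    (hy' : IsPivot G p (stage T x y k) y') (hy'T : y' ∉ T) (hij : i < j) (hj : j < k)
    (hyy' : G.Adj y' (y i)) : ¬ G.Adj (y i) (y j) := by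
  intro hadj
  have hUi := W.isDeficient i (by omega)
  obtain ⟨A, hA⟩ := C.exists_isMissed hUi
  obtain ⟨D, hD⟩ := C.exists_isBlock hUi (W.isPivot_right i (by omega))
  have hne : y j ≠ y' := fun h => C.notMem_of_isPivot (W.isDeficient k le_rfl) hy'
    (h ▸ W.right_mem_stage hj le_rfl)
  have hyjA := W.isPivot_notMem C hp hij hj.le (fun l hl => W.avoidsPast C hp l (by omega)) hA
    (W.isPivot_right j hj)
  exact W.right_notMem_stage C hij.le hj (hD.subset
    (W.mem_isBlock_of_adj C hp hy' hy'T (by omega) hyy'.symm hA hD hadj hne hyjA))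

theorem not_adj_of_notMem (W : IsWalk G p s m T x y k) (C : Counterexample G p s m) (hp : 4 ≤ p)
    (hy' : IsPivot G p (stage T x y k) y') (hy'T : y' ∉ T) {a b : V} (ha : a ∈ stage T x y k)
    (hb : b ∈ stage T x y k) (haT : a ∉ T) (hbT : b ∉ T) (hya : G.Adj y' a) (hyb : G.Adj y' b) :
    ¬ G.Adj a b := by
  intro hab
  obtain ⟨i, hi, rfl⟩ := (mem_stage.1 ha).1.resolve_left haT
  obtain ⟨j, hj, rfl⟩ := (mem_stage.1 hb).1.resolve_left hbT
  obtain h | rfl | h := lt_trichotomy i j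
  · exact W.right_not_adj_right C hp hy' hy'T h hj hya hab
  · exact hab.ne rfl
  · exact W.right_not_adj_right C hp hy' hy'T h hi hyb hab.symm

/-- The block of `y i` at stage `i` contains the two vertices and `x (i + 1)`. -/
theorem three_le_of_adj (W : IsWalk G p s m T x y k) (C : Counterexample G p s m) (hp : 4 ≤ p)
    (hy' : IsPivot G p (stage T x y k) y') (hy'T : y' ∉ T) (hi : i < k) (hyy' : G.Adj (y i) y')
    {a b : V} (hab : a ≠ b) (haU : a ∈ stage T x y k) (haT : a ∈ T) (hya : G.Adj (y i) a)
    (hbU : b ∈ stage T x y k) (hbT : b ∈ T) (hyb : G.Adj (y i) b) : 3 ≤ s := by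
  have hUi := W.isDeficient i hi.le
  obtain ⟨A, hA⟩ := C.exists_isMissed hUi
  obtain ⟨D, hD⟩ := C.exists_isBlock hUi (W.isPivot_right i hi)
  have hmem : ∀ c ∈ stage T x y k, c ∈ T → G.Adj (y i) c → c ∈ D ∧ c ≠ x (i + 1) := by
    intro c hcU hcT hyc
    have hci : c ∈ stage T x y i :=
      mem_stage.2 ⟨Or.inl hcT, fun j hj => (mem_stage.1 hcU).2 j (by omega)⟩
    refine ⟨W.mem_isBlock_of_adj C hp hy' hy'T hi hyy' hA hD hyc (fun h => hy'T (h ▸ hcT))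
      fun h => hA.notMem c h hci, ((mem_stage.1 hcU).2 (i + 1) (by omega)).symm⟩
  rw [← hD.isNClique.card_eq]
  obtain ⟨haD, hax⟩ := hmem a haU haT hya
  obtain ⟨hbD, hbx⟩ := hmem b hbU hbT hyb
  exact two_lt_card.2 ⟨a, haD, b, hbD, x (i + 1), W.mem_of_isBlock i hi D hD, hab, hax, hbx⟩

theorem exists_mem_forall_isBlock (W : IsWalk G p s m T x y k) (C : Counterexample G p s m)
    (hp : 4 ≤ p) (hy' : IsPivot G p (stage T x y k) y') (hy'T : y' ∉ T) :
    ∃ a ∈ T, ∀ D, IsBlock G s (stage T x y k) y' D → a ∈ D := by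
  by_contra! hT
  have hU := W.isDeficient k le_rfl
  have hs := C.two_le_s
  obtain ⟨D, hD⟩ := C.exists_isBlock hU hy'
  have hunique : ∀ {E}, IsBlock G s (stage T x y k) y' E → ∀ a ∈ E, a ∉ T → ∀ b ∈ E, b ∉ T →
      a = b := by
    intro E hE a ha haT b hb hbT
    by_contra hab
    exact W.not_adj_of_notMem C hp hy' hy'T (hE.subset ha) (hE.subset hb) haT hbT (hE.adj a ha)
      (hE.adj b hb) (hE.adj_of_mem ha hb hab)
  obtain ⟨g, hg, hgT⟩ : ∃ g ∈ D, g ∈ T := by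
    by_contra! h
    have := card_le_one.2 fun a ha b hb => hunique hD a ha (h a ha) b hb (h b hb)
    rw [hD.isNClique.card_eq] at this
    omega
  obtain ⟨E, hE, hgE⟩ := hT g hgT
  have hDF : ∀ {F}, IsBlock G s (stage T x y k) y' F → ∀ a ∈ D, a ≠ g → a ∈ F := fun hF =>
    C.mem_isBlock_of_ne hU hy' hD hE hF hg hgE
  have hDT : ∀ a ∈ D, a ≠ g → a ∉ T := fun a ha hag haT => by
    obtain ⟨F, hF, haF⟩ := hT a haT
    exact haF (hDF hF a ha hag)
  have hD2 : #(D.erase g) ≤ 1 := card_le_one.2 fun a ha b hb => by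
    rw [mem_erase] at ha hb
    exact hunique hD a ha.2 (hDT a ha.2 ha.1) b hb.2 (hDT b hb.2 hb.1)
  rw [card_erase_of_mem hg, hD.isNClique.card_eq] at hD2
  obtain ⟨c, hc, hcg⟩ := exists_mem_ne (hD.isNClique.card_eq ▸ hs) g
  have hcE := hDF hE c hc hcg
  obtain ⟨w, hw, hwc⟩ := exists_mem_ne (hE.isNClique.card_eq ▸ hs) c
  have hwT : w ∈ T := by
    by_contra hwT
    exact hwc (hunique hE w hw hwT c hcE (hDT c hc hcg))
  obtain ⟨i, hi, rfl⟩ := (mem_stage.1 (hD.subset hc)).1.resolve_left (hDT c hc hcg)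
  have := W.three_le_of_adj C hp hy' hy'T hi (hD.adj _ hc).symm (ne_of_mem_of_not_mem hw hgE).symm
    (hD.subset hg) hgT (hD.adj_of_mem hc hg hcg) (hE.subset hw) hwT (hE.adj_of_mem hcE hw hwc.symm)
  omega

theorem right_ne_left_notMem (W : IsWalk G p s m T x y k) (C : Counterexample G p s m) (hp : 4 ≤ p)
    (hy' : IsPivot G p (stage T x y k) y') (hne : y' ≠ x k) : y' ∉ T := by
  intro hy'T
  have hU := W.isDeficient k le_rfl
  obtain ⟨A, hA⟩ := C.exists_isMissed hU
  refine C.notMem_of_isPivot hU hy' (mem_stage.2 ⟨Or.inl hy'T, fun j hj => ?_⟩)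
  rintro rfl
  obtain rfl | hj := hj.eq_or_lt
  · exact hne rfl
  · exact W.avoidsPast C hp k le_rfl A hA j hj (hy' A hA)

theorem update (W : IsWalk G p s m T x y k) (C : Counterexample G p s m) {a b : V}
    (hb : IsPivot G p (stage T x y k) b) (hbT : b ∉ T) (haT : a ∈ T)
    (ha : ∀ D, IsBlock G s (stage T x y k) b D → a ∈ D) :
    IsWalk G p s m T (Function.update x (k + 1) a) (Function.update y k b) (k + 1) := by
  have hU := W.isDeficient k le_rfl
  obtain ⟨D, hD⟩ := C.exists_isBlock hU hb
  have hax := (mem_stage.1 (hD.subset (ha D hD))).2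
  have ha_pivot : IsPivot G p ((insert b (stage T x y k)).erase a) a :=
    hb.swap (mem_erase.2 ⟨fun h => hbT (h ▸ haT), mem_insert_self _ _⟩)
      fun u hu hua => mem_erase.2 ⟨hua, mem_insert_of_mem hu⟩
  have hx' : ∀ i ≤ k, Function.update x (k + 1) a i = x i := fun i hi =>
    Function.update_of_ne (by omega) _ _
  have hy' : ∀ i < k, Function.update y k b i = y i := fun i hi =>
    Function.update_of_ne (by omega) _ _
  have hx'k : Function.update x (k + 1) a (k + 1) = a := Function.update_self ..
  have hy'k : Function.update y k b k = b := Function.update_self ..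
  have hle : ∀ i ≤ k + 1, i ≤ k ∨ i = k + 1 := by omega
  have hlt : ∀ i < k + 1, i < k ∨ i = k := by omega
  refine ⟨fun i hi => ?_, fun i hi => ?_, fun i hi => ?_, fun i hi j hj hij => ?_,
    fun i hi => ?_, fun i hi => ?_, fun i hi => ?_⟩
  · obtain hi | rfl := hle i hi
    · rw [stage_update_of_le a b hi]
      exact W.isDeficient i hi
    · exact stage_update_succ hbT W.left_mem ▸ C.isDeficient_swap hU hb ha
  · obtain hi | rfl := hle i hi
    · rw [stage_update_of_le a b hi, hx' i hi]
      exact W.isPivot_left i hi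
    · rwa [stage_update_succ hbT W.left_mem, hx'k]
  · obtain hi | rfl := hle i hi
    · exact hx' i hi ▸ W.left_mem i hi
    · rwa [hx'k]
  · have := W.left_inj i
    grind
  · obtain hi | rfl := hlt i hi
    · exact hy' i hi ▸ W.right_notMem i hi
    · rwa [hy'k]
  · obtain hi | rfl := hlt i hi
    · rw [stage_update_of_le a b hi.le, hy' i hi]
      exact W.isPivot_right i hi
    · rwa [stage_update_of_le a b le_rfl, hy'k]
  · obtain hi | rfl := hlt i hi
    · rw [stage_update_of_le a b hi.le, hy' i hi, hx' (i + 1) hi]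
      exact W.mem_of_isBlock i hi
    · rwa [stage_update_of_le a b le_rfl, hy'k, hx'k]

theorem exists_succ (W : IsWalk G p s m T x y k) (C : Counterexample G p s m) (hp : 4 ≤ p) :
    ∃ x' y', IsWalk G p s m T x' y' (k + 1) := by
  obtain ⟨b, hb, hbx⟩ :=
    C.exists_isPivot_ne (by omega) (W.isDeficient k le_rfl) (W.isPivot_left k le_rfl)
  have hbT := W.right_ne_left_notMem C hp hb hbx
  obtain ⟨a, haT, ha⟩ := W.exists_mem_forall_isBlock C hp hb hbT
  exact ⟨_, _, W.update C hb hbT haT ha⟩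

end IsWalk

theorem isWalk_zero (hU : IsDeficient G s m U) (hv : IsPivot G p U v) (hvU : v ∉ U) :
    IsWalk G p s m (insert v U) (fun _ => v) (fun _ => v) 0 := by
  have hstage : stage (insert v U) (fun _ => v) (fun _ => v) 0 = U := by
    simp [stage, sdiff_singleton_eq_erase, hvU]
  constructor
  case isDeficient => simpa [hstage] using hU
  case isPivot_left => simpa [hstage] using hv
  all_goals simp

end Walk

/-- The vertices `x i` of a walk are distinct elements of `T`, yet every walk can be prolonged. -/
theorem Counterexample.not_isPivot (C : Counterexample G p s m) (hp : 4 ≤ p)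
    (hU : IsDeficient G s m U) (v : V) : ¬ IsPivot G p U v := by
  classical
  intro hv
  have hwalk : ∀ k, ∃ x y, IsWalk G p s m (insert v U) x y k := by
    intro k
    induction k with
    | zero => exact ⟨_, _, isWalk_zero hU hv (C.notMem_of_isPivot hU hv)⟩
    | succ k ih =>
      obtain ⟨x, y, W⟩ := ih
      exact W.exists_succ C hp
  obtain ⟨x, y, W⟩ := hwalk #(insert v U)
  have hle := card_le_card_of_injOn (s := range (#(insert v U) + 1)) x
    (fun i hi => W.left_mem i (Nat.lt_succ_iff.1 (mem_range.1 hi)))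
    fun i hi j hj => W.left_inj i (Nat.lt_succ_iff.1 (mem_range.1 hi)) j
      (Nat.lt_succ_iff.1 (mem_range.1 hj))
  rw [card_range] at hle
  omega

end Transversals

section Flips

variable {V : Type*} {G : SimpleGraph V} {P : (V → Bool) → Prop}
  {φ ψ : V → Bool} {a b c v w x y z : V}

/-- `a`, `b`, `c` span a triangle of `G` which is monochromatic under the 2-colouring `φ`. -/
structure IsMono (G : SimpleGraph V) (φ : V → Bool) (a b c : V) : Prop where
  adj_left : G.Adj a b
  adj_right : G.Adj a c
  adj : G.Adj b c
  color_left : φ b = φ a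
  color_right : φ c = φ a

theorem IsMono.swap (h : IsMono G φ a b c) : IsMono G φ a c b :=
  ⟨h.adj_right, h.adj_left, h.adj.symm, h.color_right, h.color_left⟩

theorem IsMono.rotate (h : IsMono G φ a b c) : IsMono G φ b c a :=
  ⟨h.adj, h.adj_left.symm, h.adj_right.symm, h.color_right.trans h.color_left.symm,
    h.color_left.symm⟩

theorem IsMono.swap_left (h : IsMono G φ a b c) : IsMono G φ b a c :=
  h.rotate.swap

theorem IsMono.of_eq (h : IsMono G φ a b c) (ha : ψ a = φ a) (hb : ψ b = φ b) (hc : ψ c = φ c) :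
    IsMono G ψ a b c :=
  ⟨h.adj_left, h.adj_right, h.adj, by rw [hb, ha, h.color_left], by rw [hc, ha, h.color_right]⟩

/-- `c` is a vertex of every triangle of `G` which is monochromatic under `φ`. -/
def IsCore (G : SimpleGraph V) (φ : V → Bool) (c : V) : Prop :=
  ∀ ⦃x y z⦄, IsMono G φ x y z → c = x ∨ c = y ∨ c = z

theorem IsCore.of_forall (hy : IsCore G φ y)
    (h : ∀ a b, IsMono G φ y a b → w = y ∨ w = a ∨ w = b) : IsCore G φ w := by
  intro a b c habc
  rcases hy habc with rfl | rfl | rfl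
  · exact h b c habc
  · have := h c a habc.rotate; tauto
  · have := h a b habc.rotate.rotate; tauto

theorem IsCore.exists_isMono_of_not_isCore (hy : IsCore G φ y) (hw : ¬ IsCore G φ w) :
    ∃ a b, IsMono G φ y a b ∧ a ≠ w ∧ b ≠ w := by
  by_contra! hall
  refine hw (hy.of_forall fun a b hab => ?_)
  by_cases haw : a = w
  · exact Or.inr (Or.inl haw.symm)
  · exact Or.inr (Or.inr (hall a b hab haw).symm)

/-- `ab` is an edge in the neighbourhood of `c` whose ends both have the colour opposite to `c`. -/
structure IsOppositeEdge (G : SimpleGraph V) (φ : V → Bool) (c a b : V) : Prop where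
  adj_left : G.Adj c a
  adj_right : G.Adj c b
  adj : G.Adj a b
  color_left : φ a = !φ c
  color_right : φ b = !φ c

theorem IsOppositeEdge.swap (h : IsOppositeEdge G φ c a b) : IsOppositeEdge G φ c b a :=
  ⟨h.adj_right, h.adj_left, h.adj.symm, h.color_right, h.color_left⟩

/-- Two monochromatic triangles `fvg` and `fvh` sharing the edge `fv`, whose end `f` is a core. -/
structure IsDiamond (G : SimpleGraph V) (φ : V → Bool) (f v g h : V) : Prop where
  isCore : IsCore G φ f
  left : IsMono G φ f v g
  right : IsMono G φ f v h
  ne : g ≠ h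

theorem IsDiamond.swap_wings {f g h : V} (D : IsDiamond G φ f v g h) :
    IsDiamond G φ f v h g :=
  ⟨D.isCore, D.right, D.left, D.ne.symm⟩

/-- A monochromatic triangle `fvu` with `f` a core, together with the remaining neighbours `g`, `h`,
`e` of `f` and `g`, `h`, `w` of `v`, which all have the opposite colour. -/
structure IsFan (G : SimpleGraph V) (φ : V → Bool) (f v u g h e w : V) : Prop where
  isCore : IsCore G φ f
  isMono : IsMono G φ f v u
  adj_fst_left : G.Adj f g
  adj_fst_right : G.Adj f h
  adj_snd_left : G.Adj v g
  adj_snd_right : G.Adj v h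
  adj_fst : G.Adj f e
  adj_snd : G.Adj v w
  adj_apex_fst : G.Adj u e
  adj_apex_snd : G.Adj u w
  not_adj : ¬ G.Adj g h
  color_left : φ g = !φ f
  color_right : φ h = !φ f
  color_fst : φ e = !φ f
  color_snd : φ w = !φ f
  fst_cases : ∀ x, G.Adj f x → x = v ∨ x = u ∨ x = g ∨ x = h ∨ x = e
  snd_cases : ∀ x, G.Adj v x → x = f ∨ x = u ∨ x = g ∨ x = h ∨ x = w

namespace IsFan

variable {f u g h e : V}

theorem isMono_cases (F : IsFan G φ f v u g h e w) (hab : IsMono G φ f a b) :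
    a = v ∧ b = u ∨ a = u ∧ b = v := by
  have := F.fst_cases a hab.adj_left; have := F.fst_cases b hab.adj_right
  have := hab.adj.ne; have := hab.color_left; have := hab.color_right
  have := F.color_left; have := F.color_right; have := F.color_fst
  grind

theorem isCore_snd (F : IsFan G φ f v u g h e w) : IsCore G φ v :=
  F.isCore.of_forall fun a b hab => by have := F.isMono_cases hab; grind

theorem isCore_apex (F : IsFan G φ f v u g h e w) : IsCore G φ u :=
  F.isCore.of_forall fun a b hab => by have := F.isMono_cases hab; grind

theorem swap (F : IsFan G φ f v u g h e w) : IsFan G φ v f u g h w e := by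
  have hc := F.isMono.color_left
  exact ⟨F.isCore_snd, F.isMono.swap_left, F.adj_snd_left, F.adj_snd_right, F.adj_fst_left,
    F.adj_fst_right, F.adj_snd, F.adj_fst, F.adj_apex_snd, F.adj_apex_fst, F.not_adj,
    hc ▸ F.color_left, hc ▸ F.color_right, hc ▸ F.color_snd, hc ▸ F.color_fst, F.snd_cases,
    F.fst_cases⟩

end IsFan

/-- The edges of `G` whose two ends have the same colour under `φ`. -/
def monoEdges (G : SimpleGraph V) (φ : V → Bool) : Set (Sym2 V) :=
  {e | e ∈ G.edgeSet ∧ (e.map φ).IsDiag}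

theorem ncard_monoEdges_eq [Finite V] (G : SimpleGraph V) (φ : V → Bool) (c : V) :
    (monoEdges G φ).ncard =
      {e ∈ monoEdges G φ | c ∉ e}.ncard + {x | G.Adj c x ∧ φ x = φ c}.ncard := by
  have hincident : {e ∈ monoEdges G φ | c ∈ e} = (s(c, ·)) '' {x | G.Adj c x ∧ φ x = φ c} := by
    ext e
    constructor
    · rintro ⟨he, x, rfl⟩
      obtain ⟨hadj, hcol⟩ : G.Adj c x ∧ φ c = φ x := by simpa [monoEdges] using he
      exact ⟨x, ⟨hadj, hcol.symm⟩, rfl⟩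
    · rintro ⟨x, ⟨hadj, hcol⟩, rfl⟩
      exact ⟨by simpa [monoEdges] using ⟨hadj, hcol.symm⟩, by simp⟩
  have hcard : {e ∈ monoEdges G φ | c ∈ e}.ncard = {x | G.Adj c x ∧ φ x = φ c}.ncard := by
    rw [hincident]
    exact Set.ncard_image_of_injective _ fun x y => Sym2.congr_right.1
  rw [← hcard, ← Set.ncard_union_eq (Set.disjoint_left.2 fun e he he' => he.2 he'.2)]
  congr 1
  ext e
  simp only [Set.mem_union, Set.mem_ofPred_eq]
  tauto

/-- A colouring in the family `P` with as many monochromatic edges as possible. -/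
structure IsExtremal (G : SimpleGraph V) (P : (V → Bool) → Prop) (φ : V → Bool) : Prop where
  prop : P φ
  ncard_le : ∀ ψ, P ψ → (monoEdges G ψ).ncard ≤ (monoEdges G φ).ncard

theorem exists_isExtremal [Finite V] (G : SimpleGraph V) (hφ : P φ) : ∃ ψ, IsExtremal G P ψ := by
  obtain ⟨ψ, hψ, hmax⟩ := Set.exists_max_image {ψ | P ψ} (fun ψ => (monoEdges G ψ).ncard)
    (Set.toFinite _) ⟨φ, hφ⟩
  exact ⟨ψ, hψ, hmax⟩

/-- A diamond `f`, `v`, `g`, `h` of an extremal colouring, together with the edges `pq` and `xy`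
formed by the remaining neighbours of its two ends `f` and `v`. -/
structure IsFrame (G : SimpleGraph V) (P : (V → Bool) → Prop) (φ : V → Bool)
    (f v g h p q x y : V) : Prop where
  extremal : IsExtremal G P φ
  diamond : IsDiamond G φ f v g h
  fst : IsOppositeEdge G φ f p q
  snd : IsOppositeEdge G φ v x y

namespace IsFrame

variable {f g h p q : V}

theorem swap_wings (F : IsFrame G P φ f v g h p q x y) : IsFrame G P φ f v h g p q x y :=
  ⟨F.extremal, F.diamond.swap_wings, F.fst, F.snd⟩

theorem swap_fst (F : IsFrame G P φ f v g h p q x y) : IsFrame G P φ f v g h q p x y :=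
  ⟨F.extremal, F.diamond, F.fst.swap, F.snd⟩

theorem swap_snd (F : IsFrame G P φ f v g h p q x y) : IsFrame G P φ f v g h p q y x :=
  ⟨F.extremal, F.diamond, F.fst, F.snd.swap⟩

theorem adj (F : IsFrame G P φ f v g h p q x y) : G.Adj f v :=
  F.diamond.left.adj_left

theorem color_snd (F : IsFrame G P φ f v g h p q x y) : φ v = φ f :=
  F.diamond.left.color_left

theorem color_left (F : IsFrame G P φ f v g h p q x y) : φ g = φ f :=
  F.diamond.left.color_right

theorem color_right (F : IsFrame G P φ f v g h p q x y) : φ h = φ f :=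
  F.diamond.right.color_right

theorem color_eq_not (F : IsFrame G P φ f v g h p q x y) :
    φ p = !φ f ∧ φ q = !φ f ∧ φ x = !φ f ∧ φ y = !φ f :=
  ⟨F.fst.color_left, F.fst.color_right, F.color_snd ▸ F.snd.color_left,
    F.color_snd ▸ F.snd.color_right⟩

end IsFrame

variable [DecidableEq V]

/-- The colouring `φ` with the colour of the single vertex `c` changed. -/
def flipAt (φ : V → Bool) (c : V) : V → Bool :=
  Function.update φ c (!φ c)

@[simp]
theorem flipAt_self (φ : V → Bool) (c : V) : flipAt φ c c = !φ c :=
  Function.update_self ..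

theorem flipAt_of_ne (φ : V → Bool) (h : v ≠ c) : flipAt φ c v = φ v :=
  Function.update_of_ne h ..

theorem IsCore.flipAt (hc : IsCore G φ c) : IsCore G (flipAt φ c) c := by
  intro x y z h
  by_contra! hne
  obtain ⟨hx, hy, hz⟩ := hne
  have hφ : IsMono G φ x y z := h.of_eq (flipAt_of_ne φ hx.symm).symm
    (flipAt_of_ne φ hy.symm).symm (flipAt_of_ne φ hz.symm).symm
  rcases hc hφ with h | h | h <;> contradiction

theorem isMono_flipAt_iff : IsMono G (flipAt φ c) c a b ↔ IsOppositeEdge G φ c a b := by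
  constructor <;> rintro ⟨ha, hb, hab, hca, hcb⟩
  · rw [flipAt_self, flipAt_of_ne φ ha.ne'] at hca
    rw [flipAt_self, flipAt_of_ne φ hb.ne'] at hcb
    exact ⟨ha, hb, hab, hca, hcb⟩
  · exact ⟨ha, hb, hab, by rw [flipAt_self, flipAt_of_ne φ ha.ne', hca],
      by rw [flipAt_self, flipAt_of_ne φ hb.ne', hcb]⟩

/-- A family `P` of 2-colourings of a `K₄`-free graph of maximum degree at most five, all of which
have a monochromatic triangle and a vertex meeting all of them, that is closed under flipping such
vertices. -/
structure IsFlipClosed (G : SimpleGraph V) (P : (V → Bool) → Prop) : Prop where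
  cliqueFree : G.CliqueFree 4
  card_le_of_adj : ∀ v (S : Finset V), (∀ w ∈ S, G.Adj v w) → #S ≤ 5
  exists_isMono : ∀ φ, P φ → ∃ a b c, IsMono G φ a b c
  exists_isCore : ∀ φ, P φ → ∃ c, IsCore G φ c
  flipAt : ∀ φ c, P φ → IsCore G φ c → P (flipAt φ c)

namespace IsFlipClosed

theorem not_adj (C : IsFlipClosed G P) (hab : G.Adj a b) (hac : G.Adj a c) (hbc : G.Adj b c)
    (hav : G.Adj a v) (hbv : G.Adj b v) : ¬ G.Adj c v := by
  intro hcv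
  refine C.cliqueFree {v, a, b, c} ((is3Clique_triple_iff.2 ⟨hab, hac, hbc⟩).insert ?_)
  simp [hav.symm, hbv.symm, hcv.symm]

theorem eq_of_adj (C : IsFlipClosed G P) {d e : V} (ha : G.Adj v a) (hb : G.Adj v b)
    (hc : G.Adj v c) (hd : G.Adj v d) (he : G.Adj v e) (hne : [a, b, c, d, e].Nodup)
    (hx : G.Adj v x) : x = a ∨ x = b ∨ x = c ∨ x = d ∨ x = e := by
  by_contra! hx'
  have hnd : [x, a, b, c, d, e].Nodup := List.nodup_cons.2 ⟨by simpa using hx', hne⟩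
  have hcard := C.card_le_of_adj v [x, a, b, c, d, e].toFinset (by simp_all)
  rw [List.toFinset_card_of_nodup hnd] at hcard
  simp at hcard

theorem exists_isMono_of_isCore (C : IsFlipClosed G P) (hφ : P φ) (hc : IsCore G φ c) :
    ∃ a b, IsMono G φ c a b := by
  obtain ⟨x, y, z, h⟩ := C.exists_isMono φ hφ
  rcases hc h with rfl | rfl | rfl
  exacts [⟨y, z, h⟩, ⟨z, x, h.rotate⟩, ⟨x, y, h.rotate.rotate⟩]

theorem exists_isMono_of_isCore_of_isCore (C : IsFlipClosed G P) (hφ : P φ) (ha : IsCore G φ a)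
    (hb : IsCore G φ b) (hab : a ≠ b) : ∃ c, IsMono G φ a b c := by
  obtain ⟨x, y, h⟩ := C.exists_isMono_of_isCore hφ ha
  rcases hb h with rfl | rfl | rfl
  exacts [absurd rfl hab, ⟨y, h⟩, ⟨x, h.swap⟩]

theorem exists_isOppositeEdge (C : IsFlipClosed G P) (hφ : P φ) (hc : IsCore G φ c) :
    ∃ a b, IsOppositeEdge G φ c a b := by
  obtain ⟨a, b, h⟩ := C.exists_isMono_of_isCore (C.flipAt φ c hφ hc) hc.flipAt
  exact ⟨a, b, isMono_flipAt_iff.1 h⟩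

theorem exists_isOppositeEdge_of_isCore_flipAt (C : IsFlipClosed G P) (hφ : P φ)
    (ha : IsCore G φ a) (hw : φ w = !φ a) (haw : IsCore G (CliqueFreePartition.flipAt φ a) w) :
    ∃ x y, IsOppositeEdge G φ w x y ∧ x ≠ a ∧ y ≠ a := by
  obtain ⟨x, y, hxy⟩ := C.exists_isOppositeEdge (C.flipAt φ a hφ ha) haw
  have hwa : w ≠ a := by rintro rfl; simp at hw
  have hx := hxy.color_left
  have hy := hxy.color_right
  rw [flipAt_of_ne φ hwa, hw, Bool.not_not] at hx hy
  have hxa : x ≠ a := by rintro rfl; simp at hx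
  have hya : y ≠ a := by rintro rfl; simp at hy
  rw [flipAt_of_ne φ hxa] at hx
  rw [flipAt_of_ne φ hya] at hy
  exact ⟨x, y, ⟨hxy.adj_left, hxy.adj_right, hxy.adj, by simp [hx, hw], by simp [hy, hw]⟩, hxa, hya⟩

end IsFlipClosed

namespace IsDiamond

variable {f g h p q : V}

theorem not_adj (C : IsFlipClosed G P) (D : IsDiamond G φ f v g h) : ¬ G.Adj g h :=
  C.not_adj D.left.adj_left D.left.adj_right D.left.adj D.right.adj_right D.right.adj

theorem eq_of_adj (C : IsFlipClosed G P) (D : IsDiamond G φ f v g h)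
    (hpq : IsOppositeEdge G φ f p q) (hx : G.Adj f x) :
    x = v ∨ x = g ∨ x = h ∨ x = p ∨ x = q := by
  have := D.left; have := D.right; have := D.ne
  refine C.eq_of_adj D.left.adj_left D.left.adj_right D.right.adj_right hpq.adj_left
    hpq.adj_right ?_ hx
  have := D.left.adj.ne; have := D.right.adj.ne; have := hpq.adj.ne
  have := D.left.color_left; have := D.left.color_right; have := D.right.color_right
  have := hpq.color_left; have := hpq.color_right
  simp
  grind

theorem isMono_cases (C : IsFlipClosed G P) (D : IsDiamond G φ f v g h)
    (hpq : IsOppositeEdge G φ f p q) (hab : IsMono G φ f a b) : v = a ∨ v = b := by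
  have := D.eq_of_adj C hpq hab.adj_left
  have := D.eq_of_adj C hpq hab.adj_right
  have := D.not_adj C
  have := hab.adj; have := hab.adj.symm; have := hab.adj.ne
  have := hab.color_left; have := hab.color_right; have := hpq.color_left; have := hpq.color_right
  grind

theorem swap (C : IsFlipClosed G P) (hφ : P φ) (D : IsDiamond G φ f v g h) :
    IsDiamond G φ v f g h := by
  obtain ⟨p, q, hpq⟩ := C.exists_isOppositeEdge hφ D.isCore
  exact ⟨D.isCore.of_forall fun a b hab => Or.inr (D.isMono_cases C hpq hab),
    D.left.swap_left, D.right.swap_left, D.ne⟩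

end IsDiamond

theorem IsFlipClosed.exists_isDiamond (C : IsFlipClosed G P) (hφ : P φ) {f g : V}
    (hf : IsCore G φ f) (hfvg : IsMono G φ f v g) (hg : ¬ IsCore G φ g) :
    ∃ h, IsDiamond G φ f v g h := by
  obtain ⟨p, q, hpq⟩ := C.exists_isOppositeEdge hφ hf
  obtain ⟨a, b, hab, hag, hbg⟩ := hf.exists_isMono_of_not_isCore hg
  have hv : v = g ∨ v = a ∨ v = b ∨ v = p ∨ v = q := by
    refine C.eq_of_adj hfvg.adj_right hab.adj_left hab.adj_right hpq.adj_left hpq.adj_right ?_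
      hfvg.adj_left
    have := hfvg.color_right; have := hab.color_left; have := hab.color_right
    have := hpq.color_left; have := hpq.color_right; have := hab.adj.ne; have := hpq.adj.ne
    simp
    grind
  have := hfvg.adj.ne; have := hfvg.color_left; have := hpq.color_left; have := hpq.color_right
  obtain rfl | rfl : v = a ∨ v = b := by grind
  exacts [⟨b, hf, hfvg, hab, hbg.symm⟩, ⟨a, hf, hfvg, hab.swap, hag.symm⟩]

namespace IsFan

variable {f u g h e : V}

theorem not_adj_snd_fst (C : IsFlipClosed G P) (F : IsFan G φ f v u g h e w) : ¬ G.Adj v e := by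
  intro hve
  exact C.not_adj F.isMono.adj_left F.isMono.adj_right F.isMono.adj F.adj_fst hve F.adj_apex_fst

theorem isCore_flipAt_fst (C : IsFlipClosed G P) (hφ : P φ) (F : IsFan G φ f v u g h e w) :
    IsCore G (flipAt φ f) e ∧ ∃ x, (x = g ∨ x = h) ∧ G.Adj f x ∧ G.Adj e x := by
  have key : ∀ a b, IsMono G (flipAt φ f) f a b →
      (e = a ∧ (b = g ∨ b = h)) ∨ (e = b ∧ (a = g ∨ a = h)) := by
    intro a b hab
    have hab := isMono_flipAt_iff.1 hab
    have := hab.color_left; have := hab.color_right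
    have := F.fst_cases a hab.adj_left; have := F.fst_cases b hab.adj_right
    have := hab.adj; have := hab.adj.symm; have := hab.adj.ne; have := F.not_adj
    have := F.isMono.color_left; have := F.isMono.color_right
    grind
  refine ⟨F.isCore.flipAt.of_forall fun a b hab => by have := key a b hab; grind, ?_⟩
  obtain ⟨a, b, hab⟩ := C.exists_isMono_of_isCore (C.flipAt φ f hφ F.isCore) F.isCore.flipAt
  rcases key a b hab with ⟨rfl, hb⟩ | ⟨rfl, ha⟩
  exacts [⟨b, hb, hab.adj_right, hab.adj⟩, ⟨a, ha, hab.adj_left, hab.adj.symm⟩]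

/-- Flipping `f` makes `e` a core; its opposite edge must use `u`, because `e` has too many
neighbours of its own colour. -/
theorem exists_adj_apex_fst (C : IsFlipClosed G P) (hφ : P φ) (F : IsFan G φ f v u g h e w)
    (hux : G.Adj u x) (hex : G.Adj e x) (hx : φ x = !φ f) :
    ∃ z, z ≠ f ∧ G.Adj e z ∧ G.Adj u z ∧ φ z = φ f := by
  obtain ⟨he, y, hy, hfy, hey⟩ := F.isCore_flipAt_fst C hφ
  obtain ⟨a, b, hab, haf, hbf⟩ :=
    C.exists_isOppositeEdge_of_isCore_flipAt hφ F.isCore F.color_fst he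
  have ha := hab.color_left
  have hb := hab.color_right
  rw [F.color_fst, Bool.not_not] at ha hb
  have hxy : x ≠ y := by
    rintro rfl
    have hvx : G.Adj v x := by rcases hy with rfl | rfl; exacts [F.adj_snd_left, F.adj_snd_right]
    exact C.not_adj F.isMono.adj_left F.isMono.adj_right F.isMono.adj hfy hvx hux
  have hu : u = f ∨ u = y ∨ u = x ∨ u = a ∨ u = b := by
    refine C.eq_of_adj F.adj_fst.symm hey hex hab.adj_left hab.adj_right ?_ F.adj_apex_fst.symm
    have := F.color_left; have := F.color_right; have := hab.adj.ne
    simp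
    grind
  have := F.color_left; have := F.color_right; have := F.isMono.color_right
  have := F.isMono.adj_right.ne
  obtain rfl | rfl : u = a ∨ u = b := by grind
  exacts [⟨b, hbf, hab.adj_right, hab.adj, hb⟩, ⟨a, haf, hab.adj_left, hab.adj.symm, ha⟩]

theorem apex_cases (C : IsFlipClosed G P) (F : IsFan G φ f v u g h e w) (hux : G.Adj u x)
    (hxf : x ≠ f) (hxv : x ≠ v) (hxe : x ≠ e) (hxw : x ≠ w) (huy : G.Adj u y) :
    y = f ∨ y = v ∨ y = e ∨ y = w ∨ y = x := by
  refine C.eq_of_adj F.isMono.adj_right.symm F.isMono.adj.symm F.adj_apex_fst F.adj_apex_snd hux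
    ?_ huy
  have := F.isMono.adj_left.ne; have := F.adj_fst.ne; have := F.adj_snd.ne
  have := F.not_adj_snd_fst C; have := F.swap.not_adj_snd_fst C
  have := F.adj_snd; have := F.adj_fst
  have := F.isMono.color_left; have := F.color_fst; have := F.color_snd
  simp
  grind

theorem not_adj_fst_of_ne (C : IsFlipClosed G P) (hφ : P φ) (F : IsFan G φ f v u g h e w)
    (hux : G.Adj u x) (hxw : x ≠ w) (hx : φ x = !φ f) : ¬ G.Adj e x := by
  intro hex
  obtain ⟨z, hzf, hez, huz, hz⟩ := F.exists_adj_apex_fst C hφ hux hex hx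
  have := F.isMono.color_left; have := F.color_fst; have := F.color_snd
  have := F.apex_cases C hux (by grind) (by grind) hex.ne' hxw huz
  have := F.not_adj_snd_fst C; have := hez.symm
  grind

theorem not_adj_fst_snd (C : IsFlipClosed G P) (hφ : P φ) (F : IsFan G φ f v u g h e w) :
    ¬ G.Adj e w := by
  intro hew
  obtain ⟨x, hxf, hex, hux, hx⟩ :=
    F.exists_adj_apex_fst C hφ F.adj_apex_snd hew F.color_snd
  obtain ⟨z, hzv, hwz, huz, hz⟩ :=
    F.swap.exists_adj_apex_fst C hφ F.adj_apex_fst hew.symm F.swap.color_snd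
  have := F.isMono.color_left; have := F.color_fst; have := F.color_snd
  have hxv : x ≠ v := by rintro rfl; exact F.not_adj_snd_fst C hex.symm
  have hzf : z ≠ f := by rintro rfl; exact F.swap.not_adj_snd_fst C hwz.symm
  have := F.apex_cases C hux hxf hxv hex.ne' (by grind) huz
  obtain rfl : z = x := by grind
  exact C.not_adj F.adj_apex_fst F.adj_apex_snd hew huz hex hwz

theorem false (C : IsFlipClosed G P) (hφ : P φ) (F : IsFan G φ f v u g h e w) : False := by
  obtain ⟨a, b, hab⟩ := C.exists_isOppositeEdge hφ F.isCore_apex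
  have ha := hab.color_left
  have hb := hab.color_right
  rw [F.isMono.color_right] at ha hb
  have hv := F.isMono.color_left
  have hfst : ∀ x, G.Adj u x → φ x = (!φ f) → ¬ G.Adj e x := fun x hux hx hex => by
    by_cases hxw : x = w
    · exact F.not_adj_fst_snd C hφ (hxw ▸ hex)
    · exact F.not_adj_fst_of_ne C hφ hux hxw hx hex
  have hsnd : ∀ x, G.Adj u x → φ x = (!φ f) → ¬ G.Adj w x := fun x hux hx hwx => by
    by_cases hxe : x = e
    · exact F.not_adj_fst_snd C hφ (hxe ▸ hwx).symm
    · exact F.swap.not_adj_fst_of_ne C hφ hux hxe (hv ▸ hx) hwx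
  have hae : a ≠ e := by rintro rfl; exact hfst b hab.adj_right hb hab.adj
  have hbe : b ≠ e := by rintro rfl; exact hfst a hab.adj_left ha hab.adj.symm
  have haw : a ≠ w := by rintro rfl; exact hsnd b hab.adj_right hb hab.adj
  have hbw : b ≠ w := by rintro rfl; exact hsnd a hab.adj_left ha hab.adj.symm
  have := F.apex_cases C hab.adj_left (by grind) (by grind) hae haw hab.adj_right
  have := hab.adj.ne
  grind

end IsFan

namespace IsDiamond

variable {f g h : V}

theorem exists_apex (C : IsFlipClosed G P) (hφ : P φ) (D : IsDiamond G ψ f v g h)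
    (hψ : P ψ) (hf : IsCore G φ f) (hv : φ v = φ f) (hg : φ g = !φ f) (hh : φ h = !φ f) :
    ∃ u e, IsMono G φ f v u ∧ G.Adj f e ∧ G.Adj u e ∧ φ e = (!φ f) ∧
      ∀ x, G.Adj f x → x = v ∨ x = u ∨ x = g ∨ x = h ∨ x = e := by
  obtain ⟨p, q, hpq⟩ := C.exists_isOppositeEdge hψ D.isCore
  obtain ⟨a, b, hab⟩ := C.exists_isMono_of_isCore hφ hf
  have hcases := fun x => D.eq_of_adj C hpq (x := x)
  have hopp : φ p = (!φ f) ∨ φ q = !φ f := by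
    obtain ⟨x, y, hxy⟩ := C.exists_isOppositeEdge hφ hf
    have := hcases x hxy.adj_left; have := hcases y hxy.adj_right
    have := D.not_adj C; have := hxy.adj; have := hxy.adj.ne; have := hxy.adj.symm
    have := hxy.color_left; have := hxy.color_right
    grind
  have := hcases a hab.adj_left; have := hcases b hab.adj_right
  have := hab.adj.ne; have := hab.color_left; have := hab.color_right; have := hab.swap
  rcases hopp with hp | hq
  · exact ⟨q, p, by grind, hpq.adj_left, hpq.adj.symm, hp, by grind⟩
  · exact ⟨p, q, by grind, hpq.adj_right, hpq.adj, hq, by grind⟩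

/-- If `f` is still a core for another colouring, in which the wings of the diamond have the colour
opposite to that of `f`, then the neighbourhood of `fv` is a fan. -/
theorem false_of_color_ne (C : IsFlipClosed G P) (hφ : P φ) (hψ : P ψ)
    (D : IsDiamond G ψ f v g h) (hf : IsCore G φ f) (hvf : φ v = φ f) (hg : φ g = !φ f)
    (hh : φ h = !φ f) : False := by
  obtain ⟨u, e, hu, hfe, hue, he, hfst⟩ := D.exists_apex C hφ hψ hf hvf hg hh
  have hcases : ∀ a b, IsMono G φ f a b → a = v ∧ b = u ∨ a = u ∧ b = v := by
    intro a b hab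
    have := hfst a hab.adj_left; have := hfst b hab.adj_right
    have := hab.adj.ne; have := hab.color_left; have := hab.color_right
    grind
  have hv : IsCore G φ v := hf.of_forall fun a b hab => by have := hcases a b hab; grind
  have hc := hu.color_left
  obtain ⟨u', w, hu', hvw, huw, hw, hsnd⟩ :=
    (D.swap C hψ).exists_apex C hφ hψ hv hc.symm (hc ▸ hg) (hc ▸ hh)
  obtain rfl : u' = u := by have := hcases v u' hu'.swap_left; have := hu.adj.ne; grind
  exact IsFan.false C hφ ⟨hf, hu, D.left.adj_right, D.right.adj_right, D.left.adj, D.right.adj,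
    hfe, hvw, hue, huw, D.not_adj C, hg, hh, he, hc ▸ hw, hfst, hsnd⟩

end IsDiamond

/-- The colouring obtained from `φ` by flipping the vertices `c 0`, …, `c (n - 1)` in turn. -/
def flipSeq (φ : V → Bool) (c : ℕ → V) : ℕ → V → Bool
  | 0 => φ
  | n + 1 => flipAt (flipSeq φ c n) (c n)

theorem flipSeq_succ (φ : V → Bool) (c : ℕ → V) (n : ℕ) :
    flipSeq φ c (n + 1) = flipAt (flipSeq φ c n) (c n) :=
  rfl

theorem flipSeq_of_forall_ne (φ : V → Bool) {c : ℕ → V} :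
    ∀ {n}, (∀ i < n, c i ≠ v) → flipSeq φ c n v = φ v
  | 0, _ => rfl
  | n + 1, h => by
    rw [flipSeq_succ, flipAt_of_ne _ (h n n.lt_succ_self).symm]
    exact flipSeq_of_forall_ne φ fun i hi => h i (hi.trans n.lt_succ_self)

theorem flipSeq_congr (φ : V → Bool) {c c' : ℕ → V} :
    ∀ {n}, (∀ i < n, c i = c' i) → flipSeq φ c n = flipSeq φ c' n
  | 0, _ => rfl
  | n + 1, h => by
    rw [flipSeq_succ, flipSeq_succ, h n n.lt_succ_self,
      flipSeq_congr φ fun i hi => h i (hi.trans n.lt_succ_self)]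

/-- Starting from `φ`, the distinct vertices `c 0`, …, `c (k - 1)` are flipped one after the other,
each of them being a core when it is flipped. -/
structure IsFlipWalk (G : SimpleGraph V) (φ : V → Bool) (c : ℕ → V) (k : ℕ) : Prop where
  isCore : ∀ n < k, IsCore G (flipSeq φ c n) (c n)
  injOn : Set.InjOn c (Set.Iio k)

namespace IsFlipWalk

variable {c : ℕ → V} {i j k n : ℕ}

theorem prop (C : IsFlipClosed G P) (hφ : P φ) (W : IsFlipWalk G φ c k) (hn : n ≤ k) :
    P (flipSeq φ c n) := by
  induction n with
  | zero => exact hφ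
  | succ n ih => exact C.flipAt _ _ (ih (by omega)) (W.isCore n hn)

theorem isCore_succ (W : IsFlipWalk G φ c k) (hn : n < k) :
    IsCore G (flipSeq φ c (n + 1)) (c n) :=
  (W.isCore n hn).flipAt

theorem ne (W : IsFlipWalk G φ c k) (hi : i < k) (hj : j < k) (hij : i ≠ j) : c i ≠ c j :=
  W.injOn.ne hi hj hij

theorem flipSeq_of_le (W : IsFlipWalk G φ c k) (hn : n ≤ i) (hi : i < k) :
    flipSeq φ c n (c i) = φ (c i) :=
  flipSeq_of_forall_ne φ fun j hj => W.ne (by omega) hi (by omega)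

theorem flipSeq_of_lt (W : IsFlipWalk G φ c k) (hi : i < n) (hn : n ≤ k) :
    flipSeq φ c n (c i) = !φ (c i) := by
  induction n, hi using Nat.le_induction with
  | base => rw [flipSeq_succ, flipAt_self, W.flipSeq_of_le le_rfl hn]
  | succ n hin ih =>
    rw [flipSeq_succ, flipAt_of_ne _ (W.ne (by omega) hn (by omega)), ih (by omega)]

theorem exists_isMono_of_isMono (W : IsFlipWalk G φ c (k + 1)) (hi : i < k) (hj : j < k)
    (h : IsMono G (flipSeq φ c (k + 1)) (c k) (c i) (c j)) :
    ∃ l, 0 < l ∧ l < k ∧ IsMono G φ (c 0) (c l) (c k) := by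
  wlog hij : i ≤ j generalizing i j
  · exact this hj hi h.swap (by omega)
  have hij : i < j := hij.lt_of_ne fun hij => h.adj.ne (congrArg c hij)
  have hφ : IsMono G φ (c i) (c j) (c k) := by
    obtain ⟨h₁, h₂, h₃, h₄, h₅⟩ := h.rotate
    rw [W.flipSeq_of_lt (by omega) le_rfl, W.flipSeq_of_lt (by omega) le_rfl,
      Bool.not_inj_iff] at h₄ h₅
    exact ⟨h₁, h₂, h₃, h₄, h₅⟩
  obtain _ | i := i
  · exact ⟨j, hij, hj, hφ⟩
  · have hi' := hφ.of_eq (W.flipSeq_of_le le_rfl (by omega))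
      (W.flipSeq_of_le (n := i + 1) (by omega) (by omega)) (W.flipSeq_of_le (by omega) (by omega))
    rcases W.isCore_succ (n := i) (by omega) hi' with h | h | h <;>
      exact absurd h (W.ne (by omega) (by omega) (by omega))

/-- A walk that can be neither continued nor closed produces a diamond both ends of which have been
flipped, but neither of its wings. -/
theorem exists_isCore_or_exists_isMono (C : IsFlipClosed G P) (hφ : P φ)
    (W : IsFlipWalk G φ c (k + 1)) :
    (∃ v, IsCore G (flipSeq φ c (k + 1)) v ∧ ∀ i < k + 1, c i ≠ v) ∨
      ∃ l, 0 < l ∧ l < k ∧ IsMono G φ (c 0) (c l) (c k) := by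
  by_contra! ⟨hcore, hclose⟩
  have hP := W.prop C hφ le_rfl
  have hk := W.isCore_succ k.lt_succ_self
  have hopen : ∀ x y, IsMono G (flipSeq φ c (k + 1)) (c k) x y → (∃ i < k + 1, c i = x) →
      ∀ j < k + 1, c j ≠ y := by
    rintro x y h ⟨i, hi, rfl⟩ j hj rfl
    have hik : i ≠ k := fun hik => h.adj_left.ne (congrArg c hik.symm)
    have hjk : j ≠ k := fun hjk => h.adj_right.ne (congrArg c hjk.symm)
    obtain ⟨l, h0, hl, hm⟩ := W.exists_isMono_of_isMono (by omega) (by omega) h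
    exact hclose l h0 hl hm
  obtain ⟨a, b, hab, hb⟩ : ∃ a b, IsMono G (flipSeq φ c (k + 1)) (c k) a b ∧
      ¬ IsCore G (flipSeq φ c (k + 1)) b := by
    obtain ⟨a, b, hab⟩ := C.exists_isMono_of_isCore hP hk
    by_cases ha : IsCore G (flipSeq φ c (k + 1)) a
    · refine ⟨a, b, hab, fun hb => ?_⟩
      obtain ⟨j, hj, hjb⟩ := hcore b hb
      exact hopen a b hab (hcore a ha) j hj hjb
    · exact ⟨b, a, hab.swap, ha⟩
  obtain ⟨h, D⟩ := C.exists_isDiamond hP hk hab hb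
  have hb' := hopen a b hab (hcore a (D.swap C hP).isCore)
  have hh' := hopen a h D.right (hcore a (D.swap C hP).isCore)
  obtain ⟨i, hi, rfl⟩ := hcore a (D.swap C hP).isCore
  have : i ≠ k := fun hik => hab.adj_left.ne (congrArg c hik.symm)
  have hcol := hab.color_left
  have hcb := hab.color_right
  have hch := D.right.color_right
  rw [flipSeq_of_forall_ne φ hb', W.flipSeq_of_lt k.lt_succ_self le_rfl] at hcb
  rw [flipSeq_of_forall_ne φ hh', W.flipSeq_of_lt k.lt_succ_self le_rfl] at hch
  rw [W.flipSeq_of_lt hi le_rfl, W.flipSeq_of_lt k.lt_succ_self le_rfl, Bool.not_inj_iff] at hcol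
  have hi' := W.flipSeq_of_le le_rfl hi
  refine (D.swap C hP).false_of_color_ne C (W.prop C hφ hi.le) hP (W.isCore i hi) ?_ ?_ ?_
  · rw [hi', W.flipSeq_of_le (by omega) k.lt_succ_self, hcol]
  · rw [hi', hcol, ← hcb, flipSeq_of_forall_ne φ fun j hj => hb' j (by omega)]
  · rw [hi', hcol, ← hch, flipSeq_of_forall_ne φ fun j hj => hh' j (by omega)]

theorem le_card [Fintype V] (W : IsFlipWalk G φ c k) : k ≤ Fintype.card V := by
  simpa using Fintype.card_le_of_injective (fun i : Fin k => c i) fun i j h =>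
    Fin.ext (W.injOn i.2 j.2 h)

theorem extend (W : IsFlipWalk G φ c k) (hv : IsCore G (flipSeq φ c k) v)
    (hne : ∀ i < k, c i ≠ v) : IsFlipWalk G φ (Function.update c k v) (k + 1) := by
  have hc : ∀ i < k, Function.update c k v i = c i := fun i hi => Function.update_of_ne hi.ne ..
  refine ⟨fun n hn => ?_, fun i hi j hj hij => ?_⟩
  · rw [flipSeq_congr φ fun i hi => hc i (by omega)]
    obtain hn | rfl := Nat.lt_succ_iff_lt_or_eq.1 hn
    · rw [hc n hn]; exact W.isCore n hn
    · rwa [Function.update_self]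
  · obtain hi | rfl := Nat.lt_succ_iff_lt_or_eq.1 hi <;>
      obtain hj | rfl := Nat.lt_succ_iff_lt_or_eq.1 hj
    · rw [hc i hi, hc j hj] at hij; exact W.injOn hi hj hij
    · rw [hc i hi, Function.update_self] at hij; exact absurd hij (hne i hi)
    · rw [hc j hj, Function.update_self] at hij; exact absurd hij.symm (hne j hj)
    · rfl

theorem exists_closing [Finite V] (C : IsFlipClosed G P) (hφ : P φ)
    (W : IsFlipWalk G φ c (k + 1)) :
    ∃ t c', k ≤ t ∧ IsFlipWalk G φ c' (t + 1) ∧ (∀ n < k + 1, c' n = c n) ∧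
      ∃ l, 0 < l ∧ l < t ∧ IsMono G φ (c' 0) (c' l) (c' t) := by
  have := Fintype.ofFinite V
  obtain ⟨N, hN⟩ : ∃ N, N = Fintype.card V - k := ⟨_, rfl⟩
  induction N generalizing k c with
  | zero => have := W.le_card; omega
  | succ N ih =>
    rcases W.exists_isCore_or_exists_isMono C hφ with ⟨v, hv, hne⟩ | h
    · obtain ⟨t, c', hkt, W', hc', h⟩ := ih (W.extend hv hne) (by omega)
      refine ⟨t, c', by omega, W', fun n hn => ?_, h⟩
      rw [hc' n (by omega), Function.update_of_ne (by omega)]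
    · exact ⟨k, c, le_rfl, W, fun _ _ => rfl, h⟩

end IsFlipWalk

theorem ncard_monoEdges_flipAt [Finite V] (G : SimpleGraph V) (φ : V → Bool) (c : V) :
    (monoEdges G (flipAt φ c)).ncard + {x | G.Adj c x ∧ φ x = φ c}.ncard =
      (monoEdges G φ).ncard + {x | G.Adj c x ∧ φ x = !φ c}.ncard := by
  have havoid : {e ∈ monoEdges G (flipAt φ c) | c ∉ e} = {e ∈ monoEdges G φ | c ∉ e} := by
    ext e
    refine and_congr_left fun hce => ?_
    have : e.map (flipAt φ c) = e.map φ :=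
      Sym2.map_congr fun x hx => flipAt_of_ne φ (ne_of_mem_of_not_mem hx hce)
    simp only [monoEdges, Set.mem_ofPred_eq, this]
  have hflip : {x | G.Adj c x ∧ flipAt φ c x = flipAt φ c c} = {x | G.Adj c x ∧ φ x = !φ c} := by
    ext x
    refine and_congr_right fun hx => ?_
    rw [flipAt_self, flipAt_of_ne φ hx.ne']
  rw [ncard_monoEdges_eq G (flipAt φ c) c, ncard_monoEdges_eq G φ c, havoid, hflip]
  omega

namespace IsExtremal

variable [Finite V] {p q : V}

theorem eq_or_eq (C : IsFlipClosed G P) (M : IsExtremal G P φ) (hc : IsCore G φ c)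
    (hpq : IsOppositeEdge G φ c p q) (hx : G.Adj c x) (hxc : φ x = !φ c) : x = p ∨ x = q := by
  by_contra! hne
  obtain ⟨a, b, hab⟩ := C.exists_isMono_of_isCore M.prop hc
  have hcount := ncard_monoEdges_flipAt G φ c
  have hsame : {y | G.Adj c y ∧ φ y = φ c} ⊆ {a, b} := by
    rintro y ⟨hy, hyc⟩
    have := hab.color_left; have := hab.color_right; have := hab.adj.ne
    have := hpq.color_left; have := hpq.color_right; have := hpq.adj.ne
    have := C.eq_of_adj hx hpq.adj_left hpq.adj_right hab.adj_left hab.adj_right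
      (by simp; grind) hy
    simp
    grind
  have hopp : {x, p, q} ⊆ {y | G.Adj c y ∧ φ y = !φ c} := by
    rintro y (rfl | rfl | rfl)
    exacts [⟨hx, hxc⟩, ⟨hpq.adj_left, hpq.color_left⟩, ⟨hpq.adj_right, hpq.color_right⟩]
  have := (Set.ncard_le_ncard hsame).trans (Set.ncard_insert_le a {b})
  have := Set.ncard_le_ncard hopp
  rw [Set.ncard_eq_three.2 ⟨x, p, q, hne.1, hne.2, hpq.adj.ne, rfl⟩] at this
  have := M.ncard_le _ (C.flipAt φ c M.prop hc)
  simp only [Set.ncard_singleton] at *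
  omega

theorem exists_isOppositeEdge_of_adj (C : IsFlipClosed G P) (M : IsExtremal G P φ)
    (hc : IsCore G φ c) (hx : G.Adj c x) (hxc : φ x = !φ c) : ∃ y, IsOppositeEdge G φ c x y := by
  obtain ⟨p, q, hpq⟩ := C.exists_isOppositeEdge M.prop hc
  rcases M.eq_or_eq C hc hpq hx hxc with rfl | rfl
  exacts [⟨q, hpq⟩, ⟨p, hpq.swap⟩]

theorem isCore_flipAt (C : IsFlipClosed G P) (M : IsExtremal G P φ) (ha : IsCore G φ a)
    (haw : G.Adj a w) (hw : φ w = !φ a) : IsCore G (flipAt φ a) w := by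
  obtain ⟨y, hwy⟩ := M.exists_isOppositeEdge_of_adj C ha haw hw
  refine ha.flipAt.of_forall fun x z hxz => ?_
  rw [isMono_flipAt_iff] at hxz
  have := M.eq_or_eq C ha hwy hxz.adj_left hxz.color_left
  have := M.eq_or_eq C ha hwy hxz.adj_right hxz.color_right
  have := hxz.adj.ne
  grind

theorem exists_pair_of_isCore (C : IsFlipClosed G P) (M : IsExtremal G P φ) (ha : IsCore G φ a)
    (hb : IsCore G φ b) (hab : G.Adj a b) (hcol : φ b = φ a) (haw : G.Adj a w) (hbw : G.Adj b w)
    (hw : φ w = !φ a) :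
    ∃ y z, y ≠ z ∧ G.Adj w y ∧ G.Adj w z ∧ φ y = φ w ∧ φ z = φ w := by
  obtain ⟨y, hy⟩ := M.exists_isOppositeEdge_of_adj C ha haw hw
  obtain ⟨z, hz⟩ := M.exists_isOppositeEdge_of_adj C hb hbw (hcol ▸ hw)
  refine ⟨y, z, ?_, hy.adj, hz.adj, by rw [hy.color_right, hw], by rw [hz.color_right, hcol, hw]⟩
  rintro rfl
  exact C.not_adj hab haw hbw hy.adj_right hz.adj_right hy.adj

theorem exists_adj_of_isCore (C : IsFlipClosed G P) (M : IsExtremal G P φ) (ha : IsCore G φ a)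
    (hb : IsCore G φ b) (hab : G.Adj a b) (hcol : φ b = φ a) (haw : G.Adj a w) (hbw : G.Adj b w)
    (hw : φ w = !φ a) : ∃ x, x ≠ a ∧ G.Adj w x ∧ G.Adj b x ∧ φ x = φ a := by
  obtain ⟨y, z, hyz, hwy, hwz, hy, hz⟩ := M.exists_pair_of_isCore C ha hb hab hcol haw hbw hw
  obtain ⟨x, x', hx, hxa, hxa'⟩ :=
    C.exists_isOppositeEdge_of_isCore_flipAt M.prop ha hw (M.isCore_flipAt C ha haw hw)
  have hcx := hx.color_left
  have hcx' := hx.color_right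
  rw [hw, Bool.not_not] at hcx hcx'
  have hbx := C.eq_of_adj haw.symm hwy hwz hx.adj_left hx.adj_right
    (by have := hx.adj.ne; simp; grind) hbw.symm
  obtain rfl | rfl : b = x ∨ b = x' := by have := hab.ne; grind
  exacts [⟨x', hxa', hx.adj_right, hx.adj, hcx'⟩, ⟨x, hxa, hx.adj_left, hx.adj.symm, hcx⟩]

theorem not_adj_of_isCore (C : IsFlipClosed G P) (M : IsExtremal G P φ) (ha : IsCore G φ a)
    (hb : IsCore G φ b) (hab : a ≠ b) (haw : G.Adj a w) (hw : φ w = !φ a) : ¬ G.Adj b w := by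
  intro hbw
  obtain ⟨c, habc⟩ := C.exists_isMono_of_isCore_of_isCore M.prop ha hb hab
  have hadj := habc.adj_left
  have hcol := habc.color_left
  have hw' : φ w = !φ b := hcol ▸ hw
  obtain ⟨y, z, hyz, hwy, hwz, hy, hz⟩ := M.exists_pair_of_isCore C ha hb hadj hcol haw hbw hw
  obtain ⟨x, hxa, hwx, hbx, hx⟩ := M.exists_adj_of_isCore C ha hb hadj hcol haw hbw hw
  obtain ⟨x', hxb, hwx', hax, hx'⟩ :=
    M.exists_adj_of_isCore C hb ha hadj.symm hcol.symm hbw haw hw'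
  have hxx := C.eq_of_adj haw.symm hbw.symm hwy hwz hwx
    (by have := hbx.ne; simp; grind) hwx'
  obtain rfl : x' = x := by have := hax.ne; grind
  exact C.not_adj hadj haw hbw hax hbx hwx

end IsExtremal

theorem IsFlipWalk.exists_isMono_succ {c : ℕ → V} {n k : ℕ} (C : IsFlipClosed G P) (hφ : P φ)
    (W : IsFlipWalk G φ c k) (hn : n + 1 < k) :
    ∃ σ, IsMono G (flipSeq φ c (n + 1)) (c n) (c (n + 1)) σ :=
  C.exists_isMono_of_isCore_of_isCore (W.prop C hφ hn.le) (W.isCore_succ (n.lt_succ_self.trans hn))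
    (W.isCore _ hn) (W.ne (by omega) hn (by omega))

/-- A walk is closed by the monochromatic triangle formed by `c 0`, `c (j + 1)` and its last vertex
`c t`; `σ` and `τ` complete the monochromatic triangles through the steps of the walk just before
and just after `c (j + 1)`. -/
structure IsClosing (G : SimpleGraph V) (φ : V → Bool) (c : ℕ → V) (t j : ℕ) (σ τ : V) : Prop where
  walk : IsFlipWalk G φ c (t + 1)
  lt : j + 1 < t
  isMono : IsMono G φ (c 0) (c (j + 1)) (c t)
  pred : IsMono G (flipSeq φ c (j + 1)) (c (j + 1)) (c j) σ
  succ : IsMono G (flipSeq φ c (j + 2)) (c (j + 1)) (c (j + 2)) τ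

theorem IsFlipWalk.exists_isClosing [Finite V] {c : ℕ → V} {k : ℕ} (C : IsFlipClosed G P)
    (hφ : P φ) (W : IsFlipWalk G φ c (k + 1)) :
    ∃ t c' j σ τ, k ≤ t ∧ IsClosing G φ c' t j σ τ ∧ ∀ n < k + 1, c' n = c n := by
  obtain ⟨t, c', hkt, W', hc', l, hl, hlt, h⟩ := W.exists_closing C hφ
  obtain ⟨j, rfl⟩ := Nat.exists_eq_add_of_lt hl
  rw [Nat.zero_add] at h hlt
  obtain ⟨σ, hσ⟩ := W'.exists_isMono_succ C hφ (n := j) (by omega)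
  obtain ⟨τ, hτ⟩ := W'.exists_isMono_succ C hφ (n := j + 1) (by omega)
  exact ⟨t, c', j, σ, τ, hkt, ⟨W', hlt, h, hσ.swap_left, hτ⟩, hc'⟩

namespace IsClosing

variable {c : ℕ → V} {t j : ℕ} {σ τ : V}

theorem color_pred (K : IsClosing G φ c t j σ τ) : φ (c j) = !φ (c 0) := by
  have h := K.pred.color_left
  have := K.lt
  rw [K.walk.flipSeq_of_lt (by omega) (by omega), K.walk.flipSeq_of_le le_rfl (by omega),
    K.isMono.color_left] at h
  rw [← h, Bool.not_not]

theorem color_succ (K : IsClosing G φ c t j σ τ) : φ (c (j + 2)) = !φ (c 0) := by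
  have h := K.succ.color_left
  have := K.lt
  rwa [K.walk.flipSeq_of_le le_rfl (by omega), K.walk.flipSeq_of_lt (by omega) (by omega),
    K.isMono.color_left] at h

theorem color_fst (K : IsClosing G φ c t j σ τ) : flipSeq φ c (j + 1) σ = φ (c 0) := by
  have := K.lt
  rw [K.pred.color_right, K.walk.flipSeq_of_le le_rfl (by omega), K.isMono.color_left]

theorem color_snd (K : IsClosing G φ c t j σ τ) : flipSeq φ c (j + 2) τ = !φ (c 0) := by
  have := K.lt
  rw [K.succ.color_right, K.walk.flipSeq_of_lt (by omega) (by omega), K.isMono.color_left]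

theorem pos (K : IsClosing G φ c t j σ τ) : 0 < j := by
  refine Nat.pos_of_ne_zero ?_
  rintro rfl
  simpa using K.color_pred

theorem succ_lt (K : IsClosing G φ c t j σ τ) : j + 2 < t := by
  refine lt_of_le_of_ne K.lt ?_
  rintro rfl
  simpa [K.color_succ] using K.isMono.color_right

theorem fst_ne_zero (K : IsClosing G φ c t j σ τ) : σ ≠ c 0 := by
  rintro rfl
  have := K.lt
  have h := K.color_fst
  rw [K.walk.flipSeq_of_lt (by omega) (by omega)] at h
  simp at h

theorem fst_ne_succ (K : IsClosing G φ c t j σ τ) : σ ≠ c (j + 2) := by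
  rintro rfl
  have := K.lt
  have h := K.color_fst
  rw [K.walk.flipSeq_of_le (by omega) (by omega), K.color_succ] at h
  simp at h

theorem snd_ne_last (K : IsClosing G φ c t j σ τ) : τ ≠ c t := by
  rintro rfl
  have := K.lt
  have h := K.color_snd
  rw [K.walk.flipSeq_of_le (by omega) (by omega), K.isMono.color_right] at h
  simp at h

theorem snd_ne_pred (K : IsClosing G φ c t j σ τ) : τ ≠ c j := by
  rintro rfl
  have := K.lt
  have h := K.color_snd
  rw [K.walk.flipSeq_of_lt (by omega) (by omega), K.color_pred] at h
  simp at h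

theorem eq_of_adj (C : IsFlipClosed G P) (K : IsClosing G φ c t j σ τ) (hz : G.Adj (c (j + 1)) z)
    (hz₀ : z ≠ c 0) (hz₁ : z ≠ c t) (hz₂ : z ≠ c j) (hz₃ : z ≠ c (j + 2))
    (hx : G.Adj (c (j + 1)) x) : x = c 0 ∨ x = c t ∨ x = c j ∨ x = c (j + 2) ∨ x = z := by
  have := K.pos
  have := K.succ_lt
  have h : ∀ {m n}, m < t + 1 → n < t + 1 → m ≠ n → c m ≠ c n := K.walk.ne
  refine C.eq_of_adj K.isMono.adj_left.symm K.isMono.adj K.pred.adj_left K.succ.adj_left hz ?_ hx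
  simp only [List.nodup_cons, List.mem_cons, List.not_mem_nil, or_false, not_or,
    List.nodup_nil, not_false_eq_true, and_true]
  exact ⟨⟨h (by omega) (by omega) (by omega), h (by omega) (by omega) (by omega),
    h (by omega) (by omega) (by omega), hz₀.symm⟩, ⟨h (by omega) (by omega) (by omega),
    h (by omega) (by omega) (by omega), hz₁.symm⟩, ⟨h (by omega) (by omega) (by omega), hz₂.symm⟩,
    hz₃.symm⟩

theorem eq_of_adj_fst (C : IsFlipClosed G P) (K : IsClosing G φ c t j σ τ) (hσ : σ ≠ c t)
    (hx : G.Adj (c (j + 1)) x) : x = c 0 ∨ x = c t ∨ x = c j ∨ x = c (j + 2) ∨ x = σ :=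
  K.eq_of_adj C K.pred.adj_right K.fst_ne_zero hσ K.pred.adj.ne' K.fst_ne_succ hx

theorem eq_of_adj_snd (C : IsFlipClosed G P) (K : IsClosing G φ c t j σ τ) (hτ : τ ≠ c 0)
    (hx : G.Adj (c (j + 1)) x) : x = c 0 ∨ x = c t ∨ x = c j ∨ x = c (j + 2) ∨ x = τ :=
  K.eq_of_adj C K.succ.adj_right hτ K.snd_ne_last K.snd_ne_pred K.succ.adj.ne' hx

theorem eq_or_eq (C : IsFlipClosed G P) (K : IsClosing G φ c t j σ τ) : σ = c t ∨ τ = c 0 := by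
  by_contra! ⟨hσ, hτ⟩
  obtain rfl : τ = σ := by
    rcases K.eq_of_adj_fst C hσ K.succ.adj_right with h | h | h | h | h
    exacts [absurd h hτ, absurd h K.snd_ne_last, absurd h K.snd_ne_pred,
      absurd h K.succ.adj.ne', h]
  have h := K.color_snd
  rw [flipSeq_succ, flipAt_of_ne _ K.pred.adj_right.ne', K.color_fst] at h
  simp at h

end IsClosing

theorem IsCore.isFlipWalk {c : V} (hc : IsCore G φ c) : IsFlipWalk G φ (fun _ => c) 1 := by
  refine ⟨fun n hn => ?_, fun i hi j hj _ => ?_⟩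
  · obtain rfl : n = 0 := by omega
    exact hc
  · rw [Set.mem_Iio] at hi hj; omega

theorem IsCore.exists_isClosing [Finite V] (C : IsFlipClosed G P) (hφ : P φ) (hc : IsCore G φ x) :
    ∃ c t j σ τ, IsClosing G φ c t j σ τ ∧ c 0 = x := by
  obtain ⟨t, c, j, σ, τ, -, K, h⟩ := hc.isFlipWalk.exists_isClosing (k := 0) C hφ
  exact ⟨c, t, j, σ, τ, K, h 0 one_pos⟩

theorem IsExtremal.exists_isDiamond [Finite V] (C : IsFlipClosed G P) (M : IsExtremal G P φ) :
    ∃ f v g h, IsDiamond G φ f v g h := by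
  obtain ⟨f, hf⟩ := C.exists_isCore φ M.prop
  obtain ⟨c, t, j, σ, τ, K, rfl⟩ := hf.exists_isClosing C M.prop
  by_cases hl : IsCore G φ (c (j + 1))
  swap
  · exact ⟨_, _, _, C.exists_isDiamond M.prop hf K.isMono.swap hl⟩
  by_cases ht : IsCore G φ (c t)
  swap
  · exact ⟨_, _, _, C.exists_isDiamond M.prop hf K.isMono ht⟩
  exfalso
  rcases K.eq_or_eq C with rfl | rfl
  · exact M.not_adj_of_isCore C hl ht K.isMono.adj.ne K.pred.adj_left
      (by rw [K.color_pred, K.isMono.color_left]) K.pred.adj.symm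
  · exact M.not_adj_of_isCore C hl hf K.isMono.adj_left.ne' K.succ.adj_left
      (by rw [K.color_succ, K.isMono.color_left]) K.succ.adj.symm

theorem IsDiamond.exists_isFrame {f g h p q : V} (C : IsFlipClosed G P) (M : IsExtremal G P φ)
    (D : IsDiamond G φ f v g h) (hpq : IsOppositeEdge G φ f p q) :
    ∃ x y, IsFrame G P φ f v g h p q x y := by
  obtain ⟨x, y, hxy⟩ := C.exists_isOppositeEdge M.prop (D.swap C M.prop).isCore
  exact ⟨x, y, M, D, hpq, hxy⟩

namespace IsFrame

variable {f g h p q : V}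

theorem swap_ends (C : IsFlipClosed G P) (F : IsFrame G P φ f v g h p q x y) :
    IsFrame G P φ v f g h x y p q :=
  ⟨F.extremal, F.diamond.swap C F.extremal.prop, F.snd, F.fst⟩

theorem eq_of_adj_fst (C : IsFlipClosed G P) (F : IsFrame G P φ f v g h p q x y) (hz : G.Adj f z) :
    z = v ∨ z = g ∨ z = h ∨ z = p ∨ z = q :=
  F.diamond.eq_of_adj C F.fst hz

theorem eq_of_adj_snd (C : IsFlipClosed G P) (F : IsFrame G P φ f v g h p q x y) (hz : G.Adj v z) :
    z = f ∨ z = g ∨ z = h ∨ z = x ∨ z = y :=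
  (F.swap_ends C).eq_of_adj_fst C hz

theorem not_adj_snd [Finite V] (C : IsFlipClosed G P) (F : IsFrame G P φ f v g h p q x y) :
    ¬ G.Adj v p :=
  F.extremal.not_adj_of_isCore C F.diamond.isCore (F.swap_ends C).diamond.isCore F.adj.ne
    F.fst.adj_left F.fst.color_left

theorem not_adj_fst [Finite V] (C : IsFlipClosed G P) (F : IsFrame G P φ f v g h p q x y) :
    ¬ G.Adj f x :=
  (F.swap_ends C).not_adj_snd C

theorem isMono_cases (C : IsFlipClosed G P) (F : IsFrame G P φ f v g h p q x y)
    (hab : IsMono G φ f a b) : a = v ∧ (b = g ∨ b = h) ∨ b = v ∧ (a = g ∨ a = h) := by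
  have := F.diamond.isMono_cases C F.fst hab
  have := F.eq_of_adj_fst C hab.adj_left
  have := F.eq_of_adj_fst C hab.adj_right
  have := hab.color_left; have := hab.color_right; have := hab.adj.ne; have := F.color_eq_not
  grind

theorem eq_or_eq_of_isClosing [Finite V] (C : IsFlipClosed G P)
    (F : IsFrame G P φ f v g h p q x y) {c : ℕ → V} {t j : ℕ} {σ τ : V}
    (K : IsClosing G φ c t j σ τ) (hc : c 0 = f) : c t = v ∧ (c (j + 1) = g ∨ c (j + 1) = h) := by
  subst hc
  rcases F.isMono_cases C K.isMono with ⟨hv, hw⟩ | hcase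
  swap
  · exact hcase
  exfalso
  have := F.color_eq_not
  have hsucc : c (j + 2) = x ∨ c (j + 2) = y := by
    have := F.eq_of_adj_snd C (hv ▸ K.succ.adj_left)
    have := K.color_succ; have := F.color_left; have := F.color_right
    grind
  have hpred : c j = x ∨ c j = y := by
    have := F.eq_of_adj_snd C (hv ▸ K.pred.adj_left)
    have := K.color_pred; have := F.color_left; have := F.color_right
    grind
  have hnadj : ¬ G.Adj (c (j + 2)) (c 0) := by
    rcases hsucc with h | h <;> rw [h, G.adj_comm]
    exacts [F.not_adj_fst C, F.swap_snd.not_adj_fst C]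
  have hτ : τ ≠ c 0 := fun hτ => hnadj (hτ ▸ K.succ.adj)
  have hlt := K.succ_lt
  have hτw : τ = g ∨ τ = h := by
    have := F.eq_of_adj_snd C (hv ▸ K.succ.adj_right)
    have : c j ≠ c (j + 2) := K.walk.ne (by omega) (by omega) (by omega)
    have := K.snd_ne_pred; have := K.succ.adj.ne
    grind
  have hτadj : G.Adj (c 0) τ := by
    rcases hτw with rfl | rfl
    exacts [F.diamond.left.adj_right, F.diamond.right.adj_right]
  have h₀ := K.walk.flipSeq_of_lt (i := 0) (n := j + 2) (by omega) (by omega)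
  have h₁ := K.walk.flipSeq_of_lt (i := j + 1) (n := j + 2) (by omega) (by omega)
  rw [K.isMono.color_left] at h₁
  have hmono : IsMono G (flipSeq φ c (j + 2)) (c 0) (c (j + 1)) τ :=
    ⟨K.isMono.adj_left, hτadj, K.succ.adj_right, by rw [h₀, h₁], by rw [h₀, K.color_snd]⟩
  rcases K.walk.isCore (j + 2) (by omega) hmono with h | h | h
  exacts [K.walk.ne (by omega) (by omega) (by omega) h, K.succ.adj_left.ne' h, K.succ.adj.ne h]

end IsFrame

/-- The colouring obtained from `φ` by flipping first `a` and then `b`. -/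
def flipEdge (φ : V → Bool) (a b : V) : V → Bool :=
  flipAt (flipAt φ a) b

theorem flipEdge_left (φ : V → Bool) (h : a ≠ b) : flipEdge φ a b a = !φ a := by
  rw [flipEdge, flipAt_of_ne _ h, flipAt_self]

theorem flipEdge_right (φ : V → Bool) (h : a ≠ b) : flipEdge φ a b b = !φ b := by
  rw [flipEdge, flipAt_self, flipAt_of_ne _ h.symm]

theorem flipEdge_of_ne (φ : V → Bool) (ha : v ≠ a) (hb : v ≠ b) : flipEdge φ a b v = φ v := by
  rw [flipEdge, flipAt_of_ne _ hb, flipAt_of_ne _ ha]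

namespace IsFrame

variable {f g h p q d d' x' y' : V} {c : ℕ → V} {t j : ℕ} {σ τ : V}

theorem isOppositeEdge_flipEdge (F : IsFrame G P φ f v g h p q x y) :
    IsOppositeEdge G (flipEdge φ f p) p f q := by
  have hfp := F.fst.adj_left.ne
  refine ⟨F.fst.adj_left.symm, F.fst.adj, F.fst.adj_right, ?_, ?_⟩
  · rw [flipEdge_left φ hfp, flipEdge_right φ hfp, F.fst.color_left, Bool.not_not]
  · rw [flipEdge_of_ne φ F.fst.adj_right.ne' F.fst.adj.ne', flipEdge_right φ hfp, F.fst.color_left,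
      F.fst.color_right, Bool.not_not]

theorem flipEdge_wing (F : IsFrame G P φ f v g h p q x y) (hpg : G.Adj p g) :
    flipEdge φ f p g = flipEdge φ f p p := by
  rw [flipEdge_of_ne φ F.diamond.left.adj_right.ne' hpg.ne', flipEdge_right φ F.fst.adj_left.ne,
    F.fst.color_left, F.color_left, Bool.not_not]

theorem eq_of_adj_flipEdge (C : IsFlipClosed G P) (F : IsFrame G P φ f v g h p q x y)
    (hpg : G.Adj p g) (hab : IsMono G (flipEdge φ f p) p a b) (ha : a ≠ g) (hb : b ≠ g)
    (hz : G.Adj p z) : z = f ∨ z = q ∨ z = g ∨ z = a ∨ z = b := by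
  have E := F.isOppositeEdge_flipEdge
  refine C.eq_of_adj E.adj_left E.adj_right hpg hab.adj_left hab.adj_right ?_ hz
  have := E.color_left; have := E.color_right; have := E.adj.ne
  have := hab.color_left; have := hab.color_right; have := hab.adj.ne
  have := F.flipEdge_wing hpg
  simp
  grind

theorem color_of_isMono_flipEdge (F : IsFrame G P φ f v g h p q x y)
    (hab : IsMono G (flipEdge φ f p) p a b) : φ a = φ f ∧ a ≠ f := by
  have hfp := F.fst.adj_left.ne
  have ha := hab.color_left
  rw [flipEdge_right φ hfp, F.fst.color_left, Bool.not_not] at ha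
  have haf : a ≠ f := by
    rintro rfl
    simp [flipEdge_left φ hfp] at ha
  rw [flipEdge_of_ne φ haf hab.adj_left.ne'] at ha
  exact ⟨ha, haf⟩

theorem eq_or_eq_of_adj_flipEdge (C : IsFlipClosed G P) (F : IsFrame G P φ f v g h p q x y)
    (A : IsFrame G P (flipEdge φ f p) p d g d' f q x' y') (hz : G.Adj d z) (hzp : z ≠ p)
    (hcol : φ z = !φ f) : z = x' ∨ z = y' := by
  have := A.eq_of_adj_snd C hz
  have := F.color_of_isMono_flipEdge A.diamond.right.swap
  have := F.color_left
  grind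

theorem exists_adj_adj_flipEdge (C : IsFlipClosed G P) (F : IsFrame G P φ f v g h p q x y)
    (A : IsFrame G P (flipEdge φ f p) p d g d' f q x' y') (hz : G.Adj d z) (hzp : z ≠ p)
    (hcol : φ z = !φ f) : ∃ w, G.Adj d w ∧ G.Adj z w ∧ flipEdge φ f p w = !φ f := by
  obtain ⟨hd, hdf⟩ := F.color_of_isMono_flipEdge A.diamond.left
  have hc : flipEdge φ f p d = φ f := by rw [flipEdge_of_ne φ hdf A.adj.ne', hd]
  rcases F.eq_or_eq_of_adj_flipEdge C A hz hzp hcol with rfl | rfl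
  exacts [⟨y', A.snd.adj_right, A.snd.adj, by rw [A.snd.color_right, hc]⟩,
    ⟨x', A.snd.adj_left, A.snd.adj.symm, by rw [A.snd.color_left, hc]⟩]

theorem eq_or_eq_of_adj_of_adj_flipEdge (C : IsFlipClosed G P)
    (F : IsFrame G P φ f v g h p q x y)
    (A : IsFrame G P (flipEdge φ f p) p d g d' f q x' y') (hpg : G.Adj p g) (hgz : G.Adj g z)
    (hpz : G.Adj p z) : z = f ∨ z = d := by
  rcases A.eq_of_adj_fst C hpz with rfl | rfl | rfl | rfl | rfl
  exacts [Or.inr rfl, (G.irrefl hgz).elim, (A.diamond.not_adj C hgz).elim, Or.inl rfl,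
    (C.not_adj F.fst.adj_left F.fst.adj_right F.fst.adj F.diamond.left.adj_right hpg hgz.symm).elim]

variable [Finite V]

theorem isCore_flipAt (C : IsFlipClosed G P) (F : IsFrame G P φ f v g h p q x y) :
    IsCore G (flipAt φ f) p :=
  F.extremal.isCore_flipAt C F.diamond.isCore F.fst.adj_left F.fst.color_left

theorem prop_flipEdge (C : IsFlipClosed G P) (F : IsFrame G P φ f v g h p q x y) :
    P (flipEdge φ f p) :=
  C.flipAt _ _ (C.flipAt _ _ F.extremal.prop F.diamond.isCore) (F.isCore_flipAt C)

theorem isCore_flipEdge (C : IsFlipClosed G P) (F : IsFrame G P φ f v g h p q x y) :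
    IsCore G (flipEdge φ f p) p :=
  (F.isCore_flipAt C).flipAt

theorem ncard_monoEdges_le_flipAt_add_one (C : IsFlipClosed G P)
    (F : IsFrame G P φ f v g h p q x y) :
    (monoEdges G φ).ncard ≤ (monoEdges G (flipAt φ f)).ncard + 1 := by
  have hcount := ncard_monoEdges_flipAt G φ f
  have hcol := F.color_eq_not
  have hsame : {z | G.Adj f z ∧ φ z = φ f} ⊆ {v, g, h} := by
    rintro z ⟨hz, hzf⟩
    have := F.eq_of_adj_fst C hz
    simp
    grind
  have hopp : {p, q} ⊆ {z | G.Adj f z ∧ φ z = !φ f} := by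
    rintro z (rfl | rfl)
    exacts [⟨F.fst.adj_left, hcol.1⟩, ⟨F.fst.adj_right, hcol.2.1⟩]
  have hle := Set.ncard_le_ncard hsame
  have hge := Set.ncard_le_ncard hopp
  have := Set.ncard_insert_le v {g, h}
  have := Set.ncard_insert_le g {h}
  have := Set.ncard_singleton h
  have := Set.ncard_pair F.fst.adj.ne
  omega

theorem ncard_monoEdges_flipAt_lt (C : IsFlipClosed G P) (F : IsFrame G P φ f v g h p q x y)
    (hpg : G.Adj p g) (hab : IsMono G (flipEdge φ f p) p a b) (ha : a ≠ g) (hb : b ≠ g) :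
    (monoEdges G (flipAt φ f)).ncard < (monoEdges G (flipEdge φ f p)).ncard := by
  have hcount := ncard_monoEdges_flipAt G (flipAt φ f) p
  rw [← flipEdge] at hcount
  have hcolor : ∀ {z}, G.Adj p z → (flipAt φ f z = flipEdge φ f p z) := fun hz =>
    (flipAt_of_ne _ hz.ne').symm
  have hself : flipEdge φ f p p = !flipAt φ f p := flipAt_self ..
  have hsame : {z | G.Adj p z ∧ flipAt φ f z = flipAt φ f p} ⊆ {f, q} := by
    rintro z ⟨hz, hzp⟩
    have := F.eq_of_adj_flipEdge C hpg hab ha hb hz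
    have := F.flipEdge_wing hpg; have := hab.color_left; have := hab.color_right
    rw [hcolor hz] at hzp
    simp
    grind
  have hopp : {g, a, b} ⊆ {z | G.Adj p z ∧ flipAt φ f z = !flipAt φ f p} := by
    rintro z (rfl | rfl | rfl)
    · exact ⟨hpg, by rw [hcolor hpg, F.flipEdge_wing hpg, hself]⟩
    · exact ⟨hab.adj_left, by rw [hcolor hab.adj_left, hab.color_left, hself]⟩
    · exact ⟨hab.adj_right, by rw [hcolor hab.adj_right, hab.color_right, hself]⟩
  have hle := Set.ncard_le_ncard hsame
  have hge := Set.ncard_le_ncard hopp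
  have := Set.ncard_insert_le f {q}
  have := Set.ncard_singleton q
  have := Set.ncard_eq_three.2 ⟨g, a, b, ha.symm, hb.symm, hab.adj.ne, rfl⟩
  omega

theorem isExtremal_flipEdge (C : IsFlipClosed G P) (F : IsFrame G P φ f v g h p q x y)
    (hpg : G.Adj p g) (hab : IsMono G (flipEdge φ f p) p a b) (ha : a ≠ g) (hb : b ≠ g) :
    IsExtremal G P (flipEdge φ f p) := by
  refine ⟨F.prop_flipEdge C, fun χ hχ => (F.extremal.ncard_le χ hχ).trans ?_⟩
  have := F.ncard_monoEdges_le_flipAt_add_one C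
  have := F.ncard_monoEdges_flipAt_lt C hpg hab ha hb
  omega

theorem exists_isMono_flipEdge (C : IsFlipClosed G P) (F : IsFrame G P φ f v g h p q x y)
    (hpg : G.Adj p g) : ∃ d, IsMono G (flipEdge φ f p) p d g := by
  by_contra! hall
  obtain ⟨a, b, hab⟩ := C.exists_isMono_of_isCore (F.prop_flipEdge C) (F.isCore_flipEdge C)
  have hne : ∀ {a b}, IsMono G (flipEdge φ f p) p a b → a ≠ g ∧ b ≠ g := fun {a b} hab =>
    ⟨by rintro rfl; exact hall b hab.swap, by rintro rfl; exact hall a hab⟩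
  have hcases : ∀ r s, IsMono G (flipEdge φ f p) p r s → r = a ∧ s = b ∨ r = b ∧ s = a := by
    intro r s hrs
    have E := F.isOppositeEdge_flipEdge
    have := F.eq_of_adj_flipEdge C hpg hab (hne hab).1 (hne hab).2 hrs.adj_left
    have := F.eq_of_adj_flipEdge C hpg hab (hne hab).1 (hne hab).2 hrs.adj_right
    have := hne hrs; have := hrs.adj.ne; have := hrs.color_left; have := hrs.color_right
    have := E.color_left; have := E.color_right
    grind
  have hp := F.isCore_flipEdge C
  have ha : IsCore G (flipEdge φ f p) a := hp.of_forall fun r s hrs => by grind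
  have hb : IsCore G (flipEdge φ f p) b := hp.of_forall fun r s hrs => by grind
  obtain ⟨f', v', g', h', D⟩ :=
    (F.isExtremal_flipEdge C hpg hab (hne hab).1 (hne hab).2).exists_isDiamond C
  have := hp D.left; have := hp D.right; have := ha D.left; have := ha D.right
  have := hb D.left; have := hb D.right; have := D.ne
  have := hab.adj_left.ne; have := hab.adj_right.ne; have := hab.adj.ne
  grind

theorem not_isCore_flipEdge (C : IsFlipClosed G P) (F : IsFrame G P φ f v g h p q x y)
    (hd : IsMono G (flipEdge φ f p) p d g) : ¬ IsCore G (flipEdge φ f p) g := by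
  intro hg
  have hfg := F.diamond.left.adj_right
  have hpg := hd.adj_right
  obtain ⟨a, b, hab⟩ := C.exists_isOppositeEdge (F.prop_flipEdge C) hg
  have E := F.isOppositeEdge_flipEdge
  have hcol := F.color_eq_not
  have hcolor : ∀ {z}, φ z = φ f → z ≠ f → flipEdge φ f p z = flipEdge φ f p g := by
    intro z hz hzf
    have hzp : z ≠ p := by rintro rfl; simp [hz] at hcol
    rw [flipEdge_of_ne φ hzf hzp, flipEdge_of_ne φ hfg.ne' hpg.ne', hz, F.color_left]
  have hv := hcolor F.color_snd F.adj.ne'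
  have hh := hcolor F.color_right F.diamond.right.adj_right.ne'
  have hf := E.color_left
  rw [← F.flipEdge_wing hpg] at hf
  have := hd.color_left; have := F.flipEdge_wing hpg
  have := hab.color_left; have := hab.color_right; have := hab.adj.ne
  have hvp : v ≠ p := by rintro rfl; simp [F.color_snd] at hcol
  have hvd : v ≠ d := by rintro rfl; exact F.not_adj_snd C hd.adj_left.symm
  have hfab := C.eq_of_adj F.diamond.left.adj.symm hpg.symm hd.adj.symm hab.adj_left hab.adj_right
    (by have := hd.adj_left.ne; simp; grind) hfg.symm
  have := F.adj.ne; have := F.fst.adj_left.ne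
  obtain ⟨z, hgz, hfz, hz⟩ : ∃ z, G.Adj g z ∧ G.Adj f z ∧ flipEdge φ f p z = !flipEdge φ f p g := by
    obtain rfl | rfl : f = a ∨ f = b := by grind
    exacts [⟨b, hab.adj_right, hab.adj, hab.color_right⟩,
      ⟨a, hab.adj_left, hab.adj.symm, hab.color_left⟩]
  obtain rfl : z = q := by
    have := F.eq_of_adj_fst C hfz
    grind
  exact C.not_adj F.fst.adj_left F.fst.adj_right F.fst.adj hfg hpg hgz.symm

theorem exists_isFrame_flipEdge (C : IsFlipClosed G P) (F : IsFrame G P φ f v g h p q x y)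
    (hpg : G.Adj p g) : ∃ d d' x' y', IsFrame G P (flipEdge φ f p) p d g d' f q x' y' := by
  obtain ⟨d, hd⟩ := F.exists_isMono_flipEdge C hpg
  obtain ⟨d', D⟩ := C.exists_isDiamond (F.prop_flipEdge C) (F.isCore_flipEdge C) hd
    (F.not_isCore_flipEdge C hd)
  have M := F.isExtremal_flipEdge C hpg D.right D.left.adj.ne D.ne.symm
  obtain ⟨x', y', F'⟩ := D.exists_isFrame C M F.isOppositeEdge_flipEdge
  exact ⟨d, d', x', y', F'⟩

theorem not_adj_of_adj (C : IsFlipClosed G P) (F : IsFrame G P φ f v g h p q x y)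
    (hpg : G.Adj p g) : ¬ G.Adj x g := by
  intro hxg
  have F' := F.swap_ends C
  obtain ⟨d, d', x₁, y₁, A⟩ := F.exists_isFrame_flipEdge C hpg
  obtain ⟨e, e', x₂, y₂, B⟩ := F'.exists_isFrame_flipEdge C hxg
  have hcol := F.color_eq_not
  have hv := F.color_snd
  have hg := F.color_left
  obtain ⟨hd, hdf⟩ := F.color_of_isMono_flipEdge A.diamond.left
  obtain ⟨hd', hdf'⟩ := F.color_of_isMono_flipEdge A.diamond.right.swap
  obtain ⟨he, hev⟩ := F'.color_of_isMono_flipEdge B.diamond.left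
  obtain ⟨he', hev'⟩ := F'.color_of_isMono_flipEdge B.diamond.right.swap
  have hpx : p ≠ x := by rintro rfl; exact F.not_adj_snd C F.snd.adj_left
  have hpy : p ≠ y := by rintro rfl; exact F.not_adj_snd C F.snd.adj_right
  have hqy : q ≠ y := by rintro rfl; exact F.swap_fst.not_adj_snd C F.snd.adj_right
  have hef : e ≠ f := by rintro rfl; exact F.not_adj_fst C B.adj.symm
  have hef' : e' ≠ f := by rintro rfl; exact F.not_adj_fst C B.diamond.right.adj_right.symm
  have hdv : d ≠ v := by rintro rfl; exact F.not_adj_snd C A.adj.symm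
  obtain rfl : e = d := by
    have := C.eq_of_adj F.diamond.left.adj_right.symm F.diamond.left.adj.symm hpg.symm hxg.symm
      A.diamond.left.adj.symm (by have := F.adj.ne; simp; grind) B.diamond.left.adj.symm
    grind
  have := F.eq_or_eq_of_adj_flipEdge C A B.adj.symm hpx.symm hcol.2.2.1
  obtain ⟨w, hew, hxw, hw⟩ := F.exists_adj_adj_flipEdge C A B.adj.symm hpx.symm hcol.2.2.1
  obtain rfl : w = y := by
    have hcolor : ∀ {z}, φ z = φ f → z ≠ f → w ≠ z := by
      rintro _ hz hzf rfl
      rw [flipEdge_of_ne φ hzf (by grind), hz] at hw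
      simp at hw
    rcases B.eq_of_adj_fst C hxw with h | h | h | h | h
    exacts [absurd h hew.ne', absurd h (hcolor hg F.diamond.left.adj_right.ne'),
      absurd h (hcolor (he'.trans hv) hef'), absurd h (hcolor hv F.adj.ne'), h]
  have hpcases := F'.eq_or_eq_of_adj_flipEdge C B A.adj.symm hpx (hv ▸ hcol.1)
  have hycases := F'.eq_or_eq_of_adj_flipEdge C B hew F.snd.adj.ne' (hv ▸ hcol.2.2.2)
  have hpw : G.Adj p w := by
    have := B.snd.adj; have := B.snd.adj.symm
    grind
  have := A.eq_of_adj_fst C hpw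
  have := hew.ne
  grind

theorem eq_of_adj_of_adj_snd (C : IsFlipClosed G P) (F : IsFrame G P φ f v g h p q x y)
    (hpg : G.Adj p g) (hgz : G.Adj g z) (hvz : G.Adj v z) : z = f := by
  rcases F.eq_of_adj_snd C hvz with rfl | rfl | rfl | rfl | rfl
  exacts [rfl, (G.irrefl hgz).elim, (F.diamond.not_adj C hgz).elim,
    (F.not_adj_of_adj C hpg hgz.symm).elim, (F.swap_snd.not_adj_of_adj C hpg hgz.symm).elim]

theorem exists_isClosing_flipEdge (C : IsFlipClosed G P) (F : IsFrame G P φ f v g h p q x y)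
    (A : IsFrame G P (flipEdge φ f p) p d g d' f q x' y') :
    ∃ c t j σ τ, IsClosing G φ c t j σ τ ∧ c 0 = f ∧ c 1 = p ∧ c 2 = d := by
  have hfp := F.fst.adj_left.ne
  have hfd := (F.color_of_isMono_flipEdge A.diamond.left).2.symm
  have W := F.diamond.isCore.isFlipWalk.extend (F.isCore_flipAt C) fun _ _ => hfp
  have hd : IsCore G (flipSeq φ (Function.update (fun _ => f) 1 p) 2) d :=
    (A.swap_ends C).diamond.isCore
  have W' := W.extend hd fun i hi => by
    interval_cases i
    exacts [hfd, A.adj.ne]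
  obtain ⟨t, c, j, σ, τ, -, K, hc⟩ := W'.exists_isClosing (k := 2) C F.extremal.prop
  exact ⟨c, t, j, σ, τ, K, hc 0 (by omega), hc 1 (by omega), hc 2 (by omega)⟩

theorem ne_left_of_isClosing (C : IsFlipClosed G P) (F : IsFrame G P φ f v g h p q x y)
    (A : IsFrame G P (flipEdge φ f p) p d g d' f q x' y') (K : IsClosing G φ c t j σ τ)
    (h₀ : c 0 = f) (h₁ : c 1 = p) (h₂ : c 2 = d) : ∀ i < t + 1, c i ≠ g := by
  rintro i hi rfl
  have hfg := F.diamond.left.adj_right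
  have hpg := A.diamond.left.adj_right
  have hdg := A.diamond.left.adj
  have hi₀ : i ≠ 0 := by rintro rfl; exact hfg.ne h₀.symm
  have hi₁ : i ≠ 1 := by rintro rfl; exact hpg.ne h₁.symm
  have hi₂ : i ≠ 2 := by rintro rfl; exact hdg.ne h₂.symm
  obtain ⟨hd, hdf⟩ := F.color_of_isMono_flipEdge A.diamond.left
  have hcf : flipSeq φ c i f = !φ f := h₀ ▸ K.walk.flipSeq_of_lt (by omega) hi.le
  have hcd : flipSeq φ c i d = !φ f := by
    rw [← h₂, K.walk.flipSeq_of_lt (by omega) hi.le, h₂, hd]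
  obtain ⟨a, b, hab⟩ := C.exists_isMono_of_isCore (K.walk.prop C F.extremal.prop hi.le)
    (K.walk.isCore i hi)
  have hg : flipSeq φ c i (c i) = φ f := by rw [K.walk.flipSeq_of_le le_rfl hi, F.color_left]
  have hne : ∀ {z}, flipSeq φ c i z = flipSeq φ c i (c i) → z ≠ f ∧ z ≠ d := fun {z} hz =>
    ⟨by rintro rfl; simp [hz, hg] at hcf, by rintro rfl; simp [hz, hg] at hcd⟩
  obtain ⟨haf, had⟩ := hne hab.color_left
  obtain ⟨hbf, hbd⟩ := hne hab.color_right
  have hnadj : ∀ {z}, G.Adj (c i) z → z ≠ f → z ≠ d → ¬ G.Adj v z ∧ ¬ G.Adj p z :=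
    fun hz hzf hzd => ⟨fun hvz => hzf (F.eq_of_adj_of_adj_snd C hpg hz hvz), fun hpz =>
      (F.eq_or_eq_of_adj_of_adj_flipEdge C A hpg hz hpz).elim hzf hzd⟩
  have hna := hnadj hab.adj_left haf had
  have hnb := hnadj hab.adj_right hbf hbd
  have hav : a ≠ v := by rintro rfl; exact hnb.1 hab.adj
  have hap : a ≠ p := by rintro rfl; exact hnb.2 hab.adj
  have hvp : v ≠ p := fun h => by simpa [← h, F.color_snd] using F.color_eq_not.1
  have hvd : v ≠ d := by rintro rfl; exact F.not_adj_snd C A.adj.symm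
  rcases C.eq_of_adj hfg.symm F.diamond.left.adj.symm hpg.symm hdg.symm hab.adj_left
    (by have := F.adj.ne; have := F.fst.adj_left.ne; have := A.adj.ne; simp; grind)
    hab.adj_right with h | rfl | rfl | h | h
  exacts [hbf h, hna.1 hab.adj.symm, hna.2 hab.adj.symm, hbd h, hab.adj.ne' h]

theorem snd_eq_of_isClosing (C : IsFlipClosed G P) (F : IsFrame G P φ f v g h p q x y)
    (K : IsClosing G φ c t j σ τ) (h₀ : c 0 = f) (ht : c t = v) (hj : c (j + 1) = h)
    (hg : ∀ i < t + 1, c i ≠ g) : τ = f := by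
  subst h₀ ht hj
  by_contra hτ
  obtain rfl : σ = c t := (K.eq_or_eq C).resolve_right hτ
  have hlt := K.lt
  have c₀ := K.walk.flipSeq_of_lt (i := 0) (n := j + 1) (by omega) (by omega)
  have cj := K.walk.flipSeq_of_lt (i := j) (n := j + 1) (by omega) (by omega)
  have cj₁ := K.walk.flipSeq_of_le (i := j + 1) (n := j + 1) (by omega) (by omega)
  have cj₂ := K.walk.flipSeq_of_le (i := j + 2) (n := j + 1) (by omega) (by omega)
  have cg : flipSeq φ c (j + 1) g = φ g := flipSeq_of_forall_ne φ fun i hi => hg i (by omega)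
  have cτ := K.color_snd
  rw [flipSeq_succ, flipAt_of_ne _ K.succ.adj_right.ne'] at cτ
  have ct := K.color_fst
  have := K.color_pred; have := K.color_succ; have := K.isMono.color_left
  have := F.color_left
  have hcore : IsCore G (flipSeq φ c (j + 1)) (c t) := by
    refine (K.walk.isCore (j + 1) (by omega)).of_forall fun a b hab => ?_
    have := K.eq_of_adj_snd C hτ hab.adj_left
    have := K.eq_of_adj_snd C hτ hab.adj_right
    have := hab.adj.ne; have := hab.color_left; have := hab.color_right
    grind
  obtain ⟨a, b, hab⟩ :=
    C.exists_isOppositeEdge (K.walk.prop C F.extremal.prop (by omega)) hcore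
  have := F.eq_of_adj_snd C hab.adj_left
  have := F.eq_of_adj_snd C hab.adj_right
  have := F.eq_of_adj_snd C K.pred.adj.symm
  have := K.pred.adj_left.ne
  have := F.not_adj_fst C; have := F.swap_snd.not_adj_fst C
  have := hab.color_left; have := hab.color_right; have := hab.adj; have := hab.adj.symm
  have := hab.adj.ne
  grind

theorem exists_adj_right (C : IsFlipClosed G P) (F : IsFrame G P φ f v g h p q x y)
    (hpg : G.Adj p g) : G.Adj q h ∧ ∃ r s, G.Adj r s ∧ G.Adj h r ∧ G.Adj h s ∧ r ≠ q ∧ s ≠ q ∧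
      ∀ z, G.Adj h z → z = f ∨ z = v ∨ z = q ∨ z = r ∨ z = s := by
  obtain ⟨d, d', x', y', A⟩ := F.exists_isFrame_flipEdge C hpg
  obtain ⟨c, t, j, σ, τ, K, rfl, rfl, rfl⟩ := F.exists_isClosing_flipEdge C A
  have hg := F.ne_left_of_isClosing C A K rfl rfl rfl
  have hlt := K.lt
  obtain ⟨rfl, hj⟩ := F.eq_or_eq_of_isClosing C K rfl
  obtain rfl : c (j + 1) = h := hj.resolve_left (hg _ (by omega))
  obtain rfl : τ = c 0 := F.snd_eq_of_isClosing C K rfl rfl rfl hg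
  have hcol := F.color_eq_not
  obtain rfl : c (j + 2) = q := by
    have := F.eq_of_adj_fst C K.succ.adj.symm
    have := K.color_succ; have := F.color_snd; have := F.color_left; have := F.color_right
    have : c (j + 2) ≠ c 1 := K.walk.ne (by omega) (by omega) (by omega)
    grind
  have hσ : σ ≠ c t := by
    rintro rfl
    have hcases : c j = x ∨ c j = y := by
      have := F.eq_of_adj_snd C K.pred.adj.symm
      have := K.color_pred; have := F.color_left; have := F.color_right
      grind
    have F' := F.swap_wings.swap_fst
    rcases hcases with rfl | rfl
    exacts [F'.not_adj_of_adj C K.succ.adj_left.symm K.pred.adj_left.symm,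
      F'.swap_snd.not_adj_of_adj C K.succ.adj_left.symm K.pred.adj_left.symm]
  refine ⟨K.succ.adj_left.symm, c j, σ, K.pred.adj, K.pred.adj_left, K.pred.adj_right,
    K.walk.ne (by omega) (by omega) (by omega), K.fst_ne_succ, fun z hz => ?_⟩
  have := K.eq_of_adj_fst C hσ hz
  tauto

theorem not_adj (C : IsFlipClosed G P) (F : IsFrame G P φ f v g h p q x y) : ¬ G.Adj p g := by
  intro hpg
  obtain ⟨d, d', x', y', A⟩ := F.exists_isFrame_flipEdge C hpg
  have hqd' := (A.exists_adj_right C F.diamond.left.adj_right).1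
  obtain ⟨-, r, s, hrs, hgr, hgs, hrf, hsf, hN⟩ := A.swap_wings.swap_fst.exists_adj_right C hqd'
  have hv : v = r ∨ v = s := by
    have := hN v F.diamond.left.adj.symm
    have hvp : v ≠ p := fun h => by simpa [← h, F.color_snd] using F.color_eq_not.1
    have hvd : v ≠ d := by rintro rfl; exact F.not_adj_snd C A.adj.symm
    have := F.adj.ne'
    tauto
  rcases hv with rfl | rfl
  exacts [hsf (F.eq_of_adj_of_adj_snd C hpg hgs hrs),
    hrf (F.eq_of_adj_of_adj_snd C hpg hgr hrs.symm)]

theorem not_adj_wing (C : IsFlipClosed G P) (F : IsFrame G P φ f v g h p q x y)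
    (ha : a = p ∨ a = q) (hb : b = g ∨ b = h) : ¬ G.Adj a b := by
  rcases ha with rfl | rfl <;> rcases hb with rfl | rfl
  exacts [F.not_adj C, F.swap_wings.not_adj C, F.swap_fst.not_adj C,
    F.swap_fst.swap_wings.not_adj C]

end IsFrame

theorem IsFlipClosed.false [Finite V] (C : IsFlipClosed G P) (hφ : P φ) : False := by
  obtain ⟨ψ, M⟩ := exists_isExtremal G hφ
  obtain ⟨f, v, g, h, D⟩ := M.exists_isDiamond C
  obtain ⟨p, q, hpq⟩ := C.exists_isOppositeEdge M.prop D.isCore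
  obtain ⟨x, y, F⟩ := D.exists_isFrame C M hpq
  obtain ⟨c, t, j, σ, τ, K, rfl⟩ := D.isCore.exists_isClosing C M.prop
  obtain ⟨rfl, hj⟩ := F.eq_or_eq_of_isClosing C K rfl
  have := F.color_left; have := F.color_right; have := F.color_snd
  rcases K.eq_or_eq C with rfl | rfl
  · refine (F.swap_ends C).not_adj_wing C ?_ hj K.pred.adj_left.symm
    have := F.eq_of_adj_snd C K.pred.adj.symm
    have := K.color_pred
    grind
  · refine F.not_adj_wing C ?_ hj K.succ.adj_left.symm
    have := F.eq_of_adj_fst C K.succ.adj.symm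
    have := K.color_succ
    grind

end Flips

section CriticalColourings

variable {V : Type*} {G : SimpleGraph V} {φ : V → Bool} {c : V} {s m : ℕ}

theorem exists_isMono_of_not_cliqueFreeOn {S : Set V} {β : Bool} (hS : ∀ v ∈ S, φ v = β)
    (h : ¬ G.CliqueFreeOn S 3) : ∃ a b c, IsMono G φ a b c := by
  classical
  simp only [CliqueFreeOn, not_forall, not_not] at h
  obtain ⟨A, hAS, hA⟩ := h
  obtain ⟨a, b, c, hab, hac, hbc, rfl⟩ := is3Clique_iff.1 hA
  have hβ : ∀ v ∈ ({a, b, c} : Finset V), φ v = β := fun v hv => hS v (hAS hv)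
  exact ⟨a, b, c, hab, hac, hbc, by rw [hβ a (by simp), hβ b (by simp)],
    by rw [hβ a (by simp), hβ c (by simp)]⟩

theorem IsDeficient.isMissed_of_isMono [DecidableEq V] {U : Finset V} {a b c : V}
    (hU : IsDeficient G 2 m U) (h : IsMono G (fun v => decide (v ∈ U)) a b c) :
    IsMissed G 3 U {a, b, c} := by
  have hK : G.IsNClique 3 {a, b, c} := is3Clique_triple_iff.2 ⟨h.adj_left, h.adj_right, h.adj⟩
  have hb : b ∈ U ↔ a ∈ U := by simpa using h.color_left
  have hc : c ∈ U ↔ a ∈ U := by simpa using h.color_right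
  have ha : a ∉ U := fun ha => hU.cliqueFreeOn (by simp [Set.insert_subset_iff, ha, hb, hc]) hK
  exact ⟨hK, by simp [ha, hb, hc]⟩

theorem Counterexample.le_of_isPivot {p : ℕ} {U : Finset V} (C : Counterexample G p s m)
    (hU : IsDeficient G s m U) (hc : IsPivot G p U c) : s < p := by
  classical
  obtain ⟨D, hD⟩ := C.exists_isBlock hU hc
  by_contra! hle
  exact C.cliqueFree.mono (by omega) _ (hD.isNClique.insert hD.adj)

/-- The set of vertices of colour `true`. -/
def trueSet [Fintype V] (φ : V → Bool) : Finset V :=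
  {v | φ v = true}

@[simp]
theorem mem_trueSet [Fintype V] {v : V} : v ∈ trueSet φ ↔ φ v = true := by
  simp [trueSet]

/-- A colouring with a core, all of whose monochromatic triangles have the same colour `β`, and
whose colour class `true` has `m` elements if `β` is `true` and one less if `β` is `false`. -/
structure IsCritical [Fintype V] (G : SimpleGraph V) (m : ℕ) (φ : V → Bool) : Prop where
  exists_isCore : ∃ c, IsCore G φ c
  exists_color : ∃ β, (∀ a b c, IsMono G φ a b c → φ a = β) ∧ #(trueSet φ) + (!β).toNat = m

variable [Fintype V]

theorem IsCritical.exists_isMono (hφ : IsCritical G m φ) (C : Counterexample G 3 2 m) :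
    ∃ a b c, IsMono G φ a b c := by
  by_contra hmono
  obtain ⟨β, -, hcard⟩ := hφ.exists_color
  have htrue : G.CliqueFreeOn ↑(trueSet φ) 3 := by
    by_contra h
    exact hmono (exists_isMono_of_not_cliqueFreeOn (fun v hv => mem_trueSet.1 hv) h)
  have hfalse : G.CliqueFreeOn (↑(trueSet φ))ᶜ 3 := by
    by_contra h
    refine hmono (exists_isMono_of_not_cliqueFreeOn (β := false) (fun v hv => ?_) h)
    simpa using hv
  have hle := C.le_card _ hfalse
  exact C.not_cliqueFreeOn _ hfalse (by omega) htrue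

variable [DecidableEq V]

theorem card_trueSet_flipAt (φ : V → Bool) (c : V) :
    #(trueSet (flipAt φ c)) + (φ c).toNat = #(trueSet φ) + (!φ c).toNat := by
  have herase : (trueSet (flipAt φ c)).erase c = (trueSet φ).erase c := by
    ext v
    simp only [mem_erase, mem_trueSet]
    exact and_congr_right fun hv => by rw [flipAt_of_ne φ hv]
  have hcard : ∀ ψ : V → Bool, #((trueSet ψ).erase c) + (ψ c).toNat = #(trueSet ψ) := fun ψ => by
    cases h : ψ c
    · simp [erase_eq_of_notMem, h]
    · exact card_erase_add_one (mem_trueSet.2 h)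
  rw [← hcard φ, ← hcard (flipAt φ c), herase, flipAt_self]
  omega

theorem IsCritical.flipAt (hφ : IsCritical G m φ) (C : Counterexample G 3 2 m)
    (hc : IsCore G φ c) : IsCritical G m (flipAt φ c) := by
  obtain ⟨β, hβ, hcard⟩ := hφ.exists_color
  have hcore : ∀ {ψ : V → Bool} {x y z}, IsCore G ψ c → IsMono G ψ x y z → ψ x = ψ c := by
    intro ψ x y z hc h
    rcases hc h with rfl | rfl | rfl
    exacts [rfl, h.color_left.symm, h.color_right.symm]
  obtain ⟨x, y, z, h⟩ := hφ.exists_isMono C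
  obtain rfl : φ c = β := (hcore hc h).symm.trans (hβ x y z h)
  refine ⟨⟨c, hc.flipAt⟩, !φ c, fun x y z h => ?_, ?_⟩
  · rw [hcore hc.flipAt h, flipAt_self]
  · rw [Bool.not_not, card_trueSet_flipAt, hcard]

theorem Counterexample.isFlipClosed (C : Counterexample G 3 2 m) :
    IsFlipClosed G (IsCritical G m) where
  cliqueFree := C.cliqueFree
  card_le_of_adj := C.card_le_of_adj
  exists_isMono _ hφ := hφ.exists_isMono C
  exists_isCore _ hφ := hφ.exists_isCore
  flipAt _ _ hφ hc := hφ.flipAt C hc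

theorem IsDeficient.isCritical {U : Finset V} (hU : IsDeficient G 2 m U) (hc : IsPivot G 3 U c) :
    IsCritical G m (fun v => decide (v ∈ U)) := by
  refine ⟨⟨c, fun x y z h => ?_⟩, false, fun x y z h => ?_, ?_⟩
  · simpa using hc _ (hU.isMissed_of_isMono h)
  · simpa using (hU.isMissed_of_isMono h).notMem x (by simp)
  · simpa [trueSet] using hU.card_add_one

end CriticalColourings

section MinTransversals

variable {V : Type*} {G : SimpleGraph V} {p s m : ℕ} {r : V}

theorem Counterexample.not_isPivot_of_three_le [Finite V] {U : Finset V}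
    (C : Counterexample G p s m) (hp : 3 ≤ p) (hU : IsDeficient G s m U) : ¬ IsPivot G p U r := by
  classical
  have := Fintype.ofFinite V
  intro hc
  obtain rfl | hp := hp.eq_or_lt
  · obtain rfl : s = 2 := le_antisymm (Nat.lt_succ_iff.1 (C.le_of_isPivot hU hc)) C.two_le_s
    exact C.isFlipClosed.false (hU.isCritical hc)
  · exact C.not_isPivot hp hU r hc

/-- A smallest set of vertices meeting every `p`-clique. -/
structure IsMinTransversal (G : SimpleGraph V) (p : ℕ) (T : Finset V) : Prop where
  cliqueFreeOn : G.CliqueFreeOn (↑T)ᶜ p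
  card_le : ∀ T' : Finset V, G.CliqueFreeOn (↑T')ᶜ p → #T ≤ #T'

theorem exists_isMinTransversal [Finite V] (G : SimpleGraph V) (hp : 0 < p) :
    ∃ T, IsMinTransversal G p T := by
  have := Fintype.ofFinite V
  have huniv : G.CliqueFreeOn (↑(univ : Finset V))ᶜ p := by
    rw [coe_univ, Set.compl_univ, cliqueFreeOn_empty]
    exact hp.ne'
  obtain ⟨T, hT, hmin⟩ := Set.exists_min_image {T : Finset V | G.CliqueFreeOn (↑T)ᶜ p} card
    (Set.toFinite _) ⟨univ, huniv⟩
  exact ⟨T, hT, hmin⟩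

theorem IsMinTransversal.maximum_compl [Finite V] {T : Finset V} (hT : IsMinTransversal G p T)
    {W : Set V} (hW : G.CliqueFreeOn W p) : W.ncard ≤ (↑T : Set V)ᶜ.ncard := by
  have hle := hT.card_le (Set.toFinite Wᶜ).toFinset (by simpa using hW)
  rw [← Set.ncard_eq_toFinset_card, ← Set.ncard_coe_finset T] at hle
  have := Set.ncard_add_ncard_compl W
  have := Set.ncard_add_ncard_compl (T : Set V)
  omega

theorem deleteIncidenceSet_lt {w : V} (h : G.Adj r w) : G.deleteIncidenceSet r < G :=
  (G.deleteIncidenceSet_le r).lt_of_not_ge fun hle => (deleteIncidenceSet_adj.1 (hle h)).2.1 rfl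

theorem notMem_of_isNClique_deleteIncidenceSet {A : Finset V} (hp : 2 ≤ p)
    (hA : (G.deleteIncidenceSet r).IsNClique p A) : r ∉ A := by
  intro hr
  obtain ⟨b, hb, hbr⟩ := exists_mem_ne (by rw [hA.card_eq]; omega) r
  exact (deleteIncidenceSet_adj.1 (hA.isClique hb hr hbr)).2.2 rfl

theorem isNClique_deleteIncidenceSet {n : ℕ} {A : Finset V} (hA : G.IsNClique n A) (hr : r ∉ A) :
    (G.deleteIncidenceSet r).IsNClique n A :=
  ⟨fun _ ha _ hb hab => deleteIncidenceSet_adj.2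
    ⟨hA.isClique ha hb hab, fun h => hr (h ▸ ha), fun h => hr (h ▸ hb)⟩, hA.card_eq⟩

theorem cliqueFreeOn_compl_erase_deleteIncidenceSet [DecidableEq V] {T : Finset V} (hp : 2 ≤ p)
    (hT : (G.deleteIncidenceSet r).CliqueFreeOn (↑T)ᶜ p) :
    (G.deleteIncidenceSet r).CliqueFreeOn (↑(T.erase r))ᶜ p := by
  intro A hAT hA
  refine hT (fun a ha haT => hAT ha (mem_erase.2 ⟨?_, haT⟩)) hA
  rintro rfl
  exact notMem_of_isNClique_deleteIncidenceSet hp hA ha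

namespace IsMinTransversal

variable {T U : Finset V}

theorem notMem_deleteIncidenceSet (hp : 2 ≤ p)
    (hU : IsMinTransversal (G.deleteIncidenceSet r) p U) : r ∉ U := by
  classical
  intro hr
  have := hU.card_le _ (cliqueFreeOn_compl_erase_deleteIncidenceSet hp hU.cliqueFreeOn)
  have := card_erase_lt_of_mem hr
  omega

theorem isPivot_deleteIncidenceSet (hU : IsMinTransversal (G.deleteIncidenceSet r) p U) :
    IsPivot G p U r := by
  classical
  intro A hA
  by_contra hr
  exact hU.cliqueFreeOn hA.notMem (isNClique_deleteIncidenceSet hA.isNClique hr)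

theorem isDeficient_deleteIncidenceSet (hp : 2 ≤ p) (hT : IsMinTransversal G p T) (hr : r ∈ T)
    (hU : IsMinTransversal (G.deleteIncidenceSet r) p U)
    (hUs : (G.deleteIncidenceSet r).CliqueFreeOn ↑U (s + 1)) : IsDeficient G s #T U := by
  classical
  have hrU := hU.notMem_deleteIncidenceSet hp
  refine ⟨?_, fun A hAU hA => hUs hAU (isNClique_deleteIncidenceSet hA fun h => hrU (hAU h))⟩
  have hle := hT.card_le _ hU.isPivot_deleteIncidenceSet.cliqueFreeOn_compl_insert
  have hge := hU.card_le _ (cliqueFreeOn_compl_erase_deleteIncidenceSet hp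
    (hT.cliqueFreeOn.anti _ _ (G.deleteIncidenceSet_le r)))
  rw [card_insert_of_notMem hrU] at hle
  have := card_erase_add_one hr
  omega

end IsMinTransversal

theorem exists_isMinTransversal_cliqueFreeOn [Finite V] (hp : 3 ≤ p) (hs : 2 ≤ s)
    (hdeg : ∀ v (S : Finset V), (∀ w ∈ S, G.Adj v w) → #S ≤ p + s) (hG : G.CliqueFree (p + 1)) :
    ∃ T, IsMinTransversal G p T ∧ G.CliqueFreeOn ↑T (s + 1) := by
  induction G using WellFoundedLT.induction with | _ G ih
  by_contra! hbad
  obtain ⟨T, hT⟩ := exists_isMinTransversal G (p := p) (by omega)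
  have C : Counterexample G p s #T := ⟨hs, hdeg, hG, hT.card_le, fun T' hT' hcard =>
    hbad T' ⟨hT', fun S hS => hcard ▸ hT.card_le S hS⟩⟩
  obtain ⟨K, hKT, hK⟩ : ∃ K : Finset V, ↑K ⊆ (↑T : Set V) ∧ G.IsNClique (s + 1) K := by
    simpa [CliqueFreeOn] using hbad T hT
  obtain ⟨r, hr, w, hw, hrw⟩ := one_lt_card.1 (show 1 < #K by rw [hK.card_eq]; omega)
  have hle := G.deleteIncidenceSet_le r
  obtain ⟨U, hU, hUs⟩ := ih _ (deleteIncidenceSet_lt (hK.isClique hr hw hrw))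
    (fun v S hS => hdeg v S fun w hw => hle (hS w hw)) (hG.anti hle)
  exact C.not_isPivot_of_three_le hp (hT.isDeficient_deleteIncidenceSet (by omega) (hKT hr) hU hUs)
    hU.isPivot_deleteIncidenceSet

end MinTransversals

end CliqueFreePartition

theorem statement3_general {V : Type*} [Fintype V] (H : SimpleGraph V) [DecidableRel H.Adj]
    (p q : ℕ) (hp : 3 ≤ p) (hq : 3 ≤ q) (hω : H.cliqueNum ≤ p) (hΔ : H.maxDegree < p + q) :
    ∃ V₁ : Set V, H.CliqueFreeOn V₁ p ∧
      (∀ W : Set V, H.CliqueFreeOn W p → W.ncard ≤ V₁.ncard) ∧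
      H.CliqueFreeOn V₁ᶜ q := by
  obtain ⟨s, rfl⟩ : ∃ s, q = s + 1 := ⟨q - 1, by omega⟩
  have hdeg : ∀ v (S : Finset V), (∀ w ∈ S, H.Adj v w) → S.card ≤ p + s := fun v S hS => by
    have hle : S.card ≤ H.degree v :=
      Finset.card_le_card fun w hw => (H.mem_neighborFinset v w).2 (hS w hw)
    have := H.degree_le_maxDegree v
    omega
  have hfree : H.CliqueFree (p + 1) := fun A hA => by
    have := hA.isClique.card_le_cliqueNum
    have := hA.card_eq
    omega
  obtain ⟨T, hT, hTs⟩ :=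
    CliqueFreePartition.exists_isMinTransversal_cliqueFreeOn hp (by omega) hdeg hfree
  exact ⟨(↑T)ᶜ, hT.cliqueFreeOn, fun W hW => hT.maximum_compl hW, by rwa [compl_compl]⟩

/-- Let `H` be a connected finite simple graph with `Δ(H) ≥ 5`, and let `p, q ≥ 3`
be integers with `ω(H) = p` and `p + q = Δ(H) + 1`. Then there is a subset
`V₁ ⊆ V(H)` which is a `K_p`-free set of maximum cardinality and whose complement
induces a `K_q`-free subgraph. -/
theorem statement3 {V : Type*} [Fintype V] (H : SimpleGraph V) [DecidableRel H.Adj]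
    (hconn : H.Connected) (hΔ : 5 ≤ H.maxDegree)
    (p q : ℕ) (hp : 3 ≤ p) (hq : 3 ≤ q)
    (hω : H.cliqueNum = p) (hpq : p + q = H.maxDegree + 1) :
    ∃ V₁ : Set V, H.CliqueFreeOn V₁ p ∧
      (∀ W : Set V, H.CliqueFreeOn W p → W.ncard ≤ V₁.ncard) ∧
      H.CliqueFreeOn V₁ᶜ q :=
  statement3_general H p q hp hq hω.le (by omega)
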